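/- Let n ≥ 2 and let p > 1, q > 1 satisfy 4q − (n−1)pq + n + 3 > 0. Let f₁, g₁, f₂, g₂ ∈ C_c^∞(ℝⁿ) with ∫_{ℝⁿ} g₁(x) dx > 0 and ∫_{ℝⁿ} g₂(x) dx > 0. Then there exists a constant C > 0 (depending on n, p, q and the data but not on ε) such that for every ε > 0 and every T > 1, if (u, v) is a pair of C² functions on [0,T) × ℝⁿ satisfying ∂_t²u − Δu = |v|^p and ∂_t²v − Δv = |u|^q + |∂_t u|^{(n+1)/(n−1)} pointwise, with u(0,·) = εf₁, ∂_t u(0,·) = εg₁, v(0,·) = εf₂, ∂_t v(0,·) = εg₂, and with u, v, ∂_t u, ∂_t v supported in {(t,x) : |x| ≤ t + 1}, then T ≤ C ε^{−2(n+1)(pq−1)/((n−1)(4q−(n−1)pq+n+3))}. -/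

import Mathlib

open MeasureTheory Real ENNReal FourierTransform
open scoped ContDiff

noncomputable section

/-- Euclidean space ℝⁿ. -/
abbrev Spc (n : ℕ) := EuclideanSpace ℝ (Fin n)

/-- Space-time ℝ × ℝⁿ. -/
abbrev STn (n : ℕ) := ℝ × Spc n

variable {n : ℕ}

/-- Directional derivative in the space-time direction `v`. -/
def dirD (v : STn n) (f : STn n → ℝ) : STn n → ℝ := fun p => fderiv ℝ f p v

/-- Time derivative ∂_t. -/
def dtD : (STn n → ℝ) → STn n → ℝ := dirD (1, 0)

/-- Spatial derivative ∂_j. -/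
def dxD (j : Fin n) : (STn n → ℝ) → STn n → ℝ := dirD (0, EuclideanSpace.single j 1)

/-- Spatial Laplacian. -/
def lapD (f : STn n → ℝ) : STn n → ℝ := fun p => ∑ j, dxD j (dxD j f) p

/-- d'Alembertian □ = ∂_t² − Δ. -/
def boxD (f : STn n → ℝ) : STn n → ℝ := fun p => dtD (dtD f) p - lapD f p

/-- Lorentz boost L_j = t ∂_j + x_j ∂_t. -/
def LD (j : Fin n) (f : STn n → ℝ) : STn n → ℝ := fun p => p.1 * dxD j f p + p.2 j * dtD f p

/-- Rotation Ω_{jk} = x_j ∂_k − x_k ∂_j. -/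
def RotD (j k : Fin n) (f : STn n → ℝ) : STn n → ℝ := fun p => p.2 j * dxD k f p - p.2 k * dxD j f p

/-- Scaling S = t ∂_t + x·∇. -/
def SD (f : STn n → ℝ) : STn n → ℝ := fun p => p.1 * dtD f p + ∑ j, p.2 j * dxD j f p

/-- Index type for the Klainerman vector fields. -/
def GIdx (n : ℕ) := Option (Fin n) ⊕ Fin n ⊕ (Fin n × Fin n) ⊕ Unit

instance : Fintype (GIdx n) := by unfold GIdx; infer_instance
instance : DecidableEq (GIdx n) := by unfold GIdx; infer_instance

/-- The Klainerman vector field with index `i`. -/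
def Gop : GIdx n → (STn n → ℝ) → STn n → ℝ
  | Sum.inl none => dtD
  | Sum.inl (some j) => dxD j
  | Sum.inr (Sum.inl j) => LD j
  | Sum.inr (Sum.inr (Sum.inl jk)) => RotD jk.1 jk.2
  | Sum.inr (Sum.inr (Sum.inr _)) => SD

/-- Iterated composition Γ^α along a word of indices. -/
def GwL : List (GIdx n) → (STn n → ℝ) → STn n → ℝ
  | [], f => f
  | a :: l, f => Gop a (GwL l f)

/-- Sum of a quantity over all products of at most `N` Klainerman vector fields. -/
def SumW (N : ℕ) (Φ : (STn n → ℝ) → ℝ≥0∞) (f : STn n → ℝ) : ℝ≥0∞ :=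
  ∑ m ∈ Finset.range (N + 1), ∑ w : Fin m → GIdx n, Φ (GwL (List.ofFn w) f)

/-- Pointwise norm of the full space-time gradient ∂u = (∂_t u, ∇_x u). -/
def gradN (f : STn n → ℝ) (p : STn n) : ℝ := Real.sqrt ((dtD f p) ^ 2 + ∑ j, (dxD j f p) ^ 2)

/-- Fourier transform (in space) of a real valued function. -/
def fourierS (g : Spc n → ℝ) : Spc n → ℂ := 𝓕 (fun x => (g x : ℂ))

/-- ‖ |D|^s g ‖_{L²}, i.e. the L² norm of ξ ↦ |ξ|^s (ℱ g)(ξ). -/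
def DsN (s : ℝ) (g : Spc n → ℝ) : ℝ≥0∞ :=
  eLpNorm (fun ξ : Spc n => ‖ξ‖ ^ s * ‖fourierS g ξ‖) 2 volume

/-- The surface measure on the unit sphere of ℝⁿ. -/
def sphM (n : ℕ) : Measure (Metric.sphere (0 : Spc n) 1) := (volume : Measure (Spc n)).toSphere

/-- The L^q norm of g(r ω) over the unit sphere. -/
def sphN (n : ℕ) (q : ℝ) (g : Spc n → ℝ) (r : ℝ) : ℝ≥0∞ :=
  (∫⁻ o, (‖g (r • (o : Spc n))‖₊ : ℝ≥0∞) ^ q ∂(sphM n)) ^ (1 / q)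

/-- The mixed norm ‖g‖_{p,q} = (∫_0^∞ ‖g(r·)‖_{L^q(S^{n-1})}^p r^{n-1} dr)^{1/p}. -/
def mixN (n : ℕ) (p q : ℝ) (g : Spc n → ℝ) : ℝ≥0∞ :=
  (∫⁻ r in Set.Ioi (0 : ℝ), (sphN n q g r) ^ p * ENNReal.ofReal (r ^ (n - 1))) ^ (1 / p)

/-- A space-time function which is Schwartz in the space variable for each fixed time. -/
def SchwartzInX (v : STn n → ℝ) : Prop :=
  ∀ t : ℝ, ∃ φ : SchwartzMap (Spc n) ℝ, ∀ x, v (t, x) = φ x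

/-- The space-time partial derivatives ∂_0 = ∂_t, ∂_j (j = 1,2,3) on ℝ × ℝ³. -/
def pd4 (α : Fin 4) : (STn 3 → ℝ) → STn 3 → ℝ := Fin.cases dtD (fun j => dxD j) α

/-- The null condition for a set of coefficients {A^{αβ}}. -/
def NullCond (A : Fin 4 → Fin 4 → ℝ) : Prop :=
  ∀ X : Fin 4 → ℝ, (X 0) ^ 2 = (X 1) ^ 2 + (X 2) ^ 2 + (X 3) ^ 2 →
    ∑ α, ∑ β, A α β * X α * X β = 0

/-- The null form A^{αβ} (∂_α v)(∂_β w). -/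
def QF (A : Fin 4 → Fin 4 → ℝ) (v w : STn 3 → ℝ) (p : STn 3) : ℝ :=
  ∑ α, ∑ β, A α β * pd4 α v p * pd4 β w p

/-- The good derivative T_j = ∂_j + (x_j/|x|) ∂_t. -/
def TD (j : Fin 3) (f : STn 3 → ℝ) (p : STn 3) : ℝ := dxD j f p + (p.2 j / ‖p.2‖) * dtD f p

end

/-!
The spatial averages `F`, `G` of `u`, `v` over the cone satisfy `F'' ≳ (1 + t)^(-n(p-1)) |G|^p`
and `G'' ≳ (1 + t)^(-n(q-1)) |F|^q` by Hölder's inequality. Kato's iteration shows that this system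
blows up before time `4τ` as soon as `G(τ)` is large compared with a power of `τ`, and that size is
supplied by the derivative nonlinearity.

Indeed, `exp (-|ξ| t) ∫ ∂_t u exp ⟪ξ, x⟫ dx ≳ ε` for every small frequency `ξ`, because `□u ≥ 0`.
The superposition of these exponentials over a shell of frequencies is a weight concentrated on the
light cone, so Hölder's inequality against it yields
`∫ |∂_t u|^r dx ≳ ε^r (1 + t)^((n-1)(1-r/2))`, and two integrations in time bound `G` from below.
For `r = (n+1)/(n-1)` this gives the stated exponent. Large `ε` is incompatible with `T > 1`.
-/

/-! ### Second order differential inequalities -/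

section SecondOrder

variable {f : ℝ → ℝ} {a b m : ℝ}

theorem deriv_add_mul_sub_le (hf : ContDiff ℝ 2 f) (hab : a ≤ b)
    (hm : ∀ t ∈ Set.Ioo a b, m ≤ deriv (deriv f) t) :
    deriv f a + m * (b - a) ≤ deriv f b := by
  have hf' := hf.differentiable_deriv_two
  have := (convex_Icc a b).mul_sub_le_image_sub_of_le_deriv hf'.continuous.continuousOn
    hf'.differentiableOn (by rwa [interior_Icc]) a (Set.left_mem_Icc.2 hab) b
    (Set.right_mem_Icc.2 hab) hab
  linarith

theorem deriv_le_deriv_of_deriv2_nonneg (hf : ContDiff ℝ 2 f) (hab : a ≤ b)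
    (h2 : ∀ t ∈ Set.Ioo a b, 0 ≤ deriv (deriv f) t) : deriv f a ≤ deriv f b := by
  simpa using deriv_add_mul_sub_le hf hab h2

theorem add_deriv_mul_add_sq_le (hf : ContDiff ℝ 2 f) (hab : a ≤ b)
    (hm : ∀ t ∈ Set.Ioo a b, m ≤ deriv (deriv f) t) :
    f a + deriv f a * (b - a) + m * ((b - a) ^ 2 / 2) ≤ f b := by
  have hd (t : ℝ) : HasDerivAt (fun s ↦ f s - m * ((s - a) ^ 2 / 2))
      (deriv f t - m * (t - a)) t := by
    have hsq := (((hasDerivAt_id t).sub_const a).pow 2).div_const 2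
    refine ((hf.differentiable two_ne_zero t).hasDerivAt.sub (hsq.const_mul m)).congr_deriv ?_
    simp
  have := (convex_Icc a b).mul_sub_le_image_sub_of_le_deriv (C := deriv f a)
    (fun t _ ↦ (hd t).continuousAt.continuousWithinAt)
    (fun t _ ↦ (hd t).differentiableAt.differentiableWithinAt)
    (fun t ht ↦ by
      rw [interior_Icc] at ht
      rw [(hd t).deriv]
      linarith [deriv_add_mul_sub_le hf ht.1.le fun s hs ↦ hm s ⟨hs.1, hs.2.trans ht.2⟩])
    a (Set.left_mem_Icc.2 hab) b (Set.right_mem_Icc.2 hab) hab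
  norm_num at this
  linarith

theorem monotoneOn_of_deriv2_nonneg (hf : ContDiff ℝ 2 f) (ha : 0 ≤ deriv f a)
    (h2 : ∀ t ∈ Set.Ioo a b, 0 ≤ deriv (deriv f) t) : MonotoneOn f (Set.Icc a b) := by
  have hf₁ := hf.differentiable two_ne_zero
  refine monotoneOn_of_deriv_nonneg (convex_Icc a b) hf₁.continuous.continuousOn
    hf₁.differentiableOn fun t ht ↦ ?_
  rw [interior_Icc] at ht
  exact ha.trans <| deriv_le_deriv_of_deriv2_nonneg hf ht.1.le fun s hs ↦
    h2 s ⟨hs.1, hs.2.trans ht.2⟩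

-- `∂² - l²` factors as `(∂ - l) (∂ + l)`, and `exp (-l t)` is an integrating factor for `∂ - l`.
theorem deriv_add_mul_le_exp_mul {l t : ℝ} (hf : ContDiff ℝ 2 f) (ht : 0 ≤ t)
    (h2 : ∀ s ∈ Set.Ioo 0 t, l ^ 2 * f s ≤ deriv (deriv f) s) :
    deriv f 0 + l * f 0 ≤ exp (-(l * t)) * (deriv f t + l * f t) := by
  have hd (s : ℝ) : HasDerivAt (fun s ↦ exp (-(l * s)) * (deriv f s + l * f s))
      (exp (-(l * s)) * (deriv (deriv f) s - l ^ 2 * f s)) s := by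
    have hexp := (((hasDerivAt_id s).const_mul l).neg).exp
    refine (hexp.mul ((hf.differentiable_deriv_two s).hasDerivAt.add
      ((hf.differentiable two_ne_zero s).hasDerivAt.const_mul l))).congr_deriv ?_
    simp only [id_eq, Pi.neg_apply, mul_one, mul_neg, Pi.add_apply, neg_mul]
    ring
  have hmono : MonotoneOn (fun s ↦ exp (-(l * s)) * (deriv f s + l * f s)) (Set.Icc 0 t) := by
    refine monotoneOn_of_deriv_nonneg (convex_Icc 0 t)
      (fun s _ ↦ (hd s).continuousAt.continuousWithinAt)
      (fun s _ ↦ (hd s).differentiableAt.differentiableWithinAt) fun s hs ↦ ?_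
    rw [interior_Icc] at hs
    rw [(hd s).deriv]
    exact mul_nonneg (exp_pos _).le (sub_nonneg.2 (h2 s hs))
  simpa using hmono (Set.left_mem_Icc.2 ht) (Set.right_mem_Icc.2 ht) ht

theorem half_deriv_add_mul_le_exp_mul_deriv {l t : ℝ} (hf : ContDiff ℝ 2 f) (ht : 0 ≤ t)
    (h2 : ∀ s ∈ Set.Ioo 0 t, l ^ 2 * f s ≤ deriv (deriv f) s) (h0 : l * f 0 ≤ deriv f 0) :
    (deriv f 0 + l * f 0) / 2 ≤ exp (-(l * t)) * deriv f t := by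
  have hplus := deriv_add_mul_le_exp_mul hf ht h2
  have hminus := deriv_add_mul_le_exp_mul (l := -l) hf ht (by simpa using h2)
  have hle : l * f t ≤ deriv f t := by
    by_contra! hlt
    nlinarith [mul_pos (exp_pos (-(-l * t))) (sub_pos.2 hlt)]
  nlinarith [mul_le_mul_of_nonneg_left hle (exp_pos (-(l * t))).le]

end SecondOrder

/-! ### Kato's blow-up argument -/

section Kato

/-- The coupled inequalities `F'' ≥ α |G| ^ p`, `G'' ≥ β |F| ^ q` on the time interval `(a, b)`,
for functions defined on the whole line. -/
structure IsKatoSystem (α β p q a b : ℝ) (F G : ℝ → ℝ) : Prop where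
  contDiff_fst : ContDiff ℝ 2 F
  contDiff_snd : ContDiff ℝ 2 G
  le_deriv2_fst : ∀ t ∈ Set.Ioo a b, α * |G t| ^ p ≤ deriv (deriv F) t
  le_deriv2_snd : ∀ t ∈ Set.Ioo a b, β * |F t| ^ q ≤ deriv (deriv G) t

/-- The information on `F` and `G` at time `s` which the Kato iteration propagates. -/
structure KatoState (F G : ℝ → ℝ) (γ s : ℝ) : Prop where
  fst_nonneg : 0 ≤ F s
  deriv_fst_nonneg : 0 ≤ deriv F s
  deriv_snd_nonneg : 0 ≤ deriv G s
  le_snd : γ ≤ G s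

/-- The factor by which the lower bound `γ` of `G` improves over two time steps of length `d`. -/
noncomputable def katoGain (α β p q γ d : ℝ) : ℝ :=
  β * α ^ q * γ ^ (p * q - 1) * (d ^ 2 / 2) ^ (q + 1)

variable {α β p q a b γ d s : ℝ} {F G : ℝ → ℝ}

theorem mul_katoGain (hα : 0 ≤ α) (hγ : 0 < γ) (hd : 0 < d) :
    γ * katoGain α β p q γ d = β * (α * γ ^ p * (d ^ 2 / 2)) ^ q * (d ^ 2 / 2) := by
  rw [katoGain, mul_rpow (by positivity) (by positivity), mul_rpow hα (by positivity),
    ← Real.rpow_mul hγ.le, rpow_sub_one hγ.ne', rpow_add_one (by positivity)]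
  field_simp

theorem katoGain_mul_half (hpq : p * q ≠ 1) (hγ : 0 ≤ γ) :
    katoGain α β p q (4 ^ ((q + 1) / (p * q - 1)) * γ) (d / 2) = katoGain α β p q γ d := by
  have hsq : (d / 2) ^ 2 / 2 = d ^ 2 / 2 / 4 := by ring
  rw [katoGain, katoGain, mul_rpow (by positivity) hγ, ← Real.rpow_mul (by norm_num),
    div_mul_cancel₀ _ (sub_ne_zero.2 hpq), hsq, div_rpow (by positivity) (by norm_num)]
  field_simp

theorem katoGain_iterate (hpq : p * q ≠ 1) (hγ : 0 ≤ γ) (k : ℕ) :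
    katoGain α β p q (γ * (4 ^ ((q + 1) / (p * q - 1))) ^ k) (d * (1 / 2) ^ k) =
      katoGain α β p q γ d := by
  induction k with
  | zero => simp
  | succ k ih =>
    rw [← ih, ← katoGain_mul_half hpq (γ := γ * (4 ^ ((q + 1) / (p * q - 1))) ^ k) (by positivity)
      (d := d * (1 / 2) ^ k)]
    congr 1 <;> (rw [pow_succ]; ring)

theorem IsKatoSystem.mono {a' b' : ℝ} (h : IsKatoSystem α β p q a b F G) (ha : a ≤ a')
    (hb : b' ≤ b) : IsKatoSystem α β p q a' b' F G where
  contDiff_fst := h.contDiff_fst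
  contDiff_snd := h.contDiff_snd
  le_deriv2_fst t ht := h.le_deriv2_fst t (Set.Ioo_subset_Ioo ha hb ht)
  le_deriv2_snd t ht := h.le_deriv2_snd t (Set.Ioo_subset_Ioo ha hb ht)

theorem IsKatoSystem.symm (h : IsKatoSystem α β p q a b F G) : IsKatoSystem β α q p a b G F :=
  ⟨h.contDiff_snd, h.contDiff_fst, h.le_deriv2_snd, h.le_deriv2_fst⟩

theorem IsKatoSystem.deriv2_fst_nonneg (h : IsKatoSystem α β p q a b F G) (hα : 0 ≤ α) :
    ∀ t ∈ Set.Ioo a b, 0 ≤ deriv (deriv F) t :=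
  fun t ht ↦ le_trans (by positivity) (h.le_deriv2_fst t ht)

theorem IsKatoSystem.monotoneOn_fst (h : IsKatoSystem α β p q a b F G) (hα : 0 ≤ α)
    (ha : 0 ≤ deriv F a) : MonotoneOn F (Set.Icc a b) :=
  monotoneOn_of_deriv2_nonneg h.contDiff_fst ha (h.deriv2_fst_nonneg hα)

theorem IsKatoSystem.deriv_fst_nonneg (h : IsKatoSystem α β p q a b F G) (hα : 0 ≤ α)
    (ha : 0 ≤ deriv F a) {t : ℝ} (ht : t ∈ Set.Icc a b) : 0 ≤ deriv F t :=
  ha.trans <| deriv_le_deriv_of_deriv2_nonneg h.contDiff_fst ht.1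
    ((h.mono le_rfl ht.2).deriv2_fst_nonneg hα)

theorem IsKatoSystem.mul_sq_le_fst (h : IsKatoSystem α β p q a b F G) (hab : a ≤ b) (hp : 0 ≤ p)
    (hα : 0 ≤ α) (hγ : 0 ≤ γ) (hF : 0 ≤ F a) (hF' : 0 ≤ deriv F a)
    (hG : ∀ t ∈ Set.Ioo a b, γ ≤ G t) :
    α * γ ^ p * ((b - a) ^ 2 / 2) ≤ F b := by
  have htaylor := add_deriv_mul_add_sq_le h.contDiff_fst hab (m := α * γ ^ p) fun t ht ↦
    le_trans (by have := (hG t ht).trans (le_abs_self _); gcongr) (h.le_deriv2_fst t ht)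
  linarith [mul_nonneg hF' (sub_nonneg.2 hab)]

theorem KatoState.step (hs : KatoState F G γ s) (h : IsKatoSystem α β p q s (s + 2 * d) F G)
    (hp : 0 ≤ p) (hq : 0 ≤ q) (hα : 0 ≤ α) (hβ : 0 ≤ β) (hγ : 0 < γ) (hd : 0 < d) :
    KatoState F G (γ * katoGain α β p q γ d) (s + 2 * d) := by
  have hmonoF := h.monotoneOn_fst hα hs.deriv_fst_nonneg
  have hmonoG := h.symm.monotoneOn_fst hβ hs.deriv_snd_nonneg
  have hleft : s ∈ Set.Icc s (s + 2 * d) := ⟨le_rfl, by linarith⟩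
  have hmid : s + d ∈ Set.Icc s (s + 2 * d) := ⟨by linarith, by linarith⟩
  have hright : s + 2 * d ∈ Set.Icc s (s + 2 * d) := ⟨by linarith, le_rfl⟩
  have hFmid : α * γ ^ p * (d ^ 2 / 2) ≤ F (s + d) := by
    simpa using (h.mono le_rfl hmid.2).mul_sq_le_fst hmid.1 hp hα hγ.le hs.fst_nonneg
      hs.deriv_fst_nonneg fun t ht ↦
        hs.le_snd.trans (hmonoG hleft ⟨ht.1.le, ht.2.le.trans hmid.2⟩ ht.1.le)
  have hGmid : 0 ≤ G (s + d) := hγ.le.trans (hs.le_snd.trans (hmonoG hleft hmid hmid.1))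
  refine ⟨hs.fst_nonneg.trans (hmonoF hleft hright hright.1),
    h.deriv_fst_nonneg hα hs.deriv_fst_nonneg hright,
    h.symm.deriv_fst_nonneg hβ hs.deriv_snd_nonneg hright, ?_⟩
  have hGright := (h.symm.mono hmid.1 le_rfl).mul_sq_le_fst hmid.2 hq hβ (by positivity) hGmid
    (h.symm.deriv_fst_nonneg hβ hs.deriv_snd_nonneg hmid) fun t ht ↦
      hFmid.trans (hmonoF hmid ⟨hmid.1.trans ht.1.le, ht.2.le⟩ ht.1.le)
  rw [mul_katoGain hα hγ hd]
  convert hGright using 3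
  ring

theorem KatoState.iterate (ha : KatoState F G γ a) (h : IsKatoSystem α β p q a b F G)
    (hab : a < b) (hp : 0 ≤ p) (hq : 0 ≤ q) (hpq : p * q ≠ 1) (hα : 0 ≤ α) (hβ : 0 ≤ β)
    (hγ : 0 < γ)
    (hgain : 4 ^ ((q + 1) / (p * q - 1)) ≤ katoGain α β p q γ ((b - a) / 4)) (k : ℕ) :
    KatoState F G (γ * (4 ^ ((q + 1) / (p * q - 1))) ^ k) (b - (b - a) * (1 / 2) ^ k) := by
  induction k with
  | zero => simpa using ha
  | succ k ih =>
    set μ : ℝ := 4 ^ ((q + 1) / (p * q - 1))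
    have hpow : (0 : ℝ) < (1 / 2) ^ k := by positivity
    have hpow_le : (1 / 2 : ℝ) ^ k ≤ 1 := pow_le_one₀ (by norm_num) (by norm_num)
    have htime_pos : 0 < (b - a) / 4 * (1 / 2) ^ k := mul_pos (by linarith) hpow
    have htime : b - (b - a) * (1 / 2) ^ k + 2 * ((b - a) / 4 * (1 / 2) ^ k) =
        b - (b - a) * (1 / 2) ^ (k + 1) := by ring
    have hstep := ih.step (d := (b - a) / 4 * (1 / 2) ^ k)
      (h.mono (by nlinarith) (by nlinarith)) hp hq hα hβ (by positivity) htime_pos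
    rw [katoGain_iterate hpq hγ.le, htime] at hstep
    refine { hstep with le_snd := le_trans ?_ hstep.le_snd }
    rw [pow_succ, ← mul_assoc]
    gcongr

/-- Otherwise `G` would exceed `γ μ ^ k` for every `k`, with a fixed `μ > 1`, at times
accumulating at `b`. -/
theorem KatoState.katoGain_lt (ha : KatoState F G γ a) (h : IsKatoSystem α β p q a b F G)
    (hab : a < b) (hp : 0 ≤ p) (hq : 0 ≤ q) (hpq : 1 < p * q) (hα : 0 ≤ α) (hβ : 0 ≤ β)
    (hγ : 0 < γ) :
    katoGain α β p q γ ((b - a) / 4) < 4 ^ ((q + 1) / (p * q - 1)) := by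
  by_contra! hgain
  have hμ : (1 : ℝ) < 4 ^ ((q + 1) / (p * q - 1)) :=
    one_lt_rpow (by norm_num) (div_pos (by linarith) (by linarith))
  obtain ⟨k, hk⟩ := pow_unbounded_of_one_lt (G b / γ) hμ
  have hstate := ha.iterate h hab hp hq hpq.ne' hα hβ hγ hgain k
  have hpow : (0 : ℝ) ≤ (1 / 2) ^ k := by positivity
  have hpow_le : (1 / 2 : ℝ) ^ k ≤ 1 := pow_le_one₀ (by norm_num) (by norm_num)
  have hGb := h.symm.monotoneOn_fst hβ ha.deriv_snd_nonneg
    (show b - (b - a) * (1 / 2) ^ k ∈ Set.Icc a b by constructor <;> nlinarith)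
    (Set.right_mem_Icc.2 hab.le) (by nlinarith)
  rw [div_lt_iff₀' hγ] at hk
  linarith [hstate.le_snd]

end Kato

/-! ### Lifespan of the averaged system -/

theorem two_rpow_neg_abs_mul_rpow_le {x y : ℝ} (σ : ℝ) (hx : 0 < x) (hxy : x / 2 ≤ y)
    (hyx : y ≤ 2 * x) : 2 ^ (-|σ|) * x ^ σ ≤ y ^ σ := by
  rcases le_total 0 σ with hσ | hσ
  · rw [abs_of_nonneg hσ, rpow_neg two_pos.le, ← div_eq_inv_mul, ← div_rpow hx.le two_pos.le]
    gcongr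
  · rw [abs_of_nonpos hσ, neg_neg, ← mul_rpow two_pos.le hx.le]
    exact rpow_le_rpow_of_nonpos (by linarith) hyx hσ

theorem eventually_mul_le_mul_rpow_atTop {s k : ℝ} (A : ℝ) (hs : 1 < s) (hk : 0 < k) :
    ∀ᶠ ε : ℝ in Filter.atTop, A * ε ≤ k * ε ^ s := by
  filter_upwards [(tendsto_rpow_atTop (sub_pos.2 hs)).eventually_ge_atTop (A / k),
    Filter.eventually_gt_atTop 0] with ε hε hε0
  rw [div_le_iff₀' hk, rpow_sub_one hε0.ne', ← mul_div_assoc, le_div_iff₀ hε0] at hε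
  exact hε

theorem le_rpow_mul_rpow_of_mul_le {M K D κ x ε : ℝ} (hM : 0 < M) (hD : 0 < D) (hx : 0 < x)
    (hε : 0 < ε) (h : M * (ε ^ κ * x ^ D) ≤ K) :
    x ≤ (K / M) ^ (1 / D) * ε ^ (-(κ / D)) := by
  have hK : 0 ≤ K := le_trans (by positivity) h
  have hxD : x ^ D ≤ K / M * ε ^ (-κ) := by
    rw [rpow_neg hε.le, div_mul_eq_mul_div, le_div_iff₀ hM, ← div_eq_mul_inv,
      le_div_iff₀ (by positivity)]
    linarith
  calc x = (x ^ D) ^ (1 / D) := by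
        rw [← Real.rpow_mul hx.le, mul_one_div_cancel hD.ne', Real.rpow_one]
    _ ≤ (K / M * ε ^ (-κ)) ^ (1 / D) := by gcongr
    _ = (K / M) ^ (1 / D) * ε ^ (-(κ / D)) := by
        rw [mul_rpow (by positivity) (by positivity), ← Real.rpow_mul hε.le, neg_mul,
          mul_one_div]

/-- The inequalities satisfied on `(0, T)` by the spatial averages `F`, `G` of the components of a
solution of size `ε`: the powers of `t + 1` weighted by `ν` come from Hölder's inequality on the
support, the term with `σ` and `r` from the derivative nonlinearity. -/
structure AverageSystem (ν σ p q r c A ε T : ℝ) (F G : ℝ → ℝ) : Prop where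
  contDiff_fst : ContDiff ℝ 2 F
  contDiff_snd : ContDiff ℝ 2 G
  fst_zero : -(A * ε) ≤ F 0
  snd_zero : -(A * ε) ≤ G 0
  deriv_fst_zero : c * ε ≤ deriv F 0
  deriv_snd_zero : c * ε ≤ deriv G 0
  le_deriv2_fst : ∀ t ∈ Set.Ioo 0 T, c * (t + 1) ^ (-(ν * (p - 1))) * |G t| ^ p ≤ deriv (deriv F) t
  le_deriv2_snd : ∀ t ∈ Set.Ioo 0 T, c * (t + 1) ^ (-(ν * (q - 1))) * |F t| ^ q ≤ deriv (deriv G) t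
  forcing : ∀ t ∈ Set.Ioo 0 T, c * ε ^ r * (t + 1) ^ σ ≤ deriv (deriv G) t

namespace AverageSystem

variable {ν σ p q r c A ε T : ℝ} {F G : ℝ → ℝ}

theorem isKatoSystem {a b m : ℝ} (S : AverageSystem ν σ p q r c A ε T F G) (hν : 0 ≤ ν)
    (hp : 1 ≤ p) (hq : 1 ≤ q) (hc : 0 ≤ c) (ha : 0 ≤ a) (hb : b ≤ T) (hm : b + 1 ≤ m) :
    IsKatoSystem (c * m ^ (-(ν * (p - 1)))) (c * m ^ (-(ν * (q - 1)))) p q a b F G := by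
  have hweight {e t : ℝ} (he : 1 ≤ e) (ht : t ∈ Set.Ioo a b) :
      c * m ^ (-(ν * (e - 1))) ≤ c * (t + 1) ^ (-(ν * (e - 1))) :=
    mul_le_mul_of_nonneg_left (rpow_le_rpow_of_nonpos (by linarith [ht.1]) (by linarith [ht.2])
      (neg_nonpos.2 (mul_nonneg hν (by linarith)))) hc
  have hsub {t : ℝ} (ht : t ∈ Set.Ioo a b) : t ∈ Set.Ioo 0 T :=
    ⟨ha.trans_lt ht.1, ht.2.trans_le hb⟩
  exact ⟨S.contDiff_fst, S.contDiff_snd,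
    fun t ht ↦ (mul_le_mul_of_nonneg_right (hweight hp ht) (by positivity)).trans
      (S.le_deriv2_fst t (hsub ht)),
    fun t ht ↦ (mul_le_mul_of_nonneg_right (hweight hq ht) (by positivity)).trans
      (S.le_deriv2_snd t (hsub ht))⟩

theorem deriv2_fst_nonneg (S : AverageSystem ν σ p q r c A ε T F G) (hc : 0 ≤ c) {t : ℝ}
    (ht : t ∈ Set.Ioo 0 T) : 0 ≤ deriv (deriv F) t :=
  le_trans (by have := ht.1; positivity) (S.le_deriv2_fst t ht)

theorem deriv2_snd_nonneg (S : AverageSystem ν σ p q r c A ε T F G) (hc : 0 ≤ c) {t : ℝ}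
    (ht : t ∈ Set.Ioo 0 T) : 0 ≤ deriv (deriv G) t :=
  le_trans (by have := ht.1; positivity) (S.le_deriv2_snd t ht)

theorem le_deriv_fst (S : AverageSystem ν σ p q r c A ε T F G) (hc : 0 ≤ c) {t : ℝ}
    (ht : t ∈ Set.Icc 0 T) : c * ε ≤ deriv F t :=
  S.deriv_fst_zero.trans <| deriv_le_deriv_of_deriv2_nonneg S.contDiff_fst ht.1 fun _ hs ↦
    S.deriv2_fst_nonneg hc ⟨hs.1, hs.2.trans_le ht.2⟩

theorem le_deriv_snd (S : AverageSystem ν σ p q r c A ε T F G) (hc : 0 ≤ c) {t : ℝ}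
    (ht : t ∈ Set.Icc 0 T) : c * ε ≤ deriv G t :=
  S.deriv_snd_zero.trans <| deriv_le_deriv_of_deriv2_nonneg S.contDiff_snd ht.1 fun _ hs ↦
    S.deriv2_snd_nonneg hc ⟨hs.1, hs.2.trans_le ht.2⟩

theorem le_fst (S : AverageSystem ν σ p q r c A ε T F G) (hc : 0 ≤ c) {t : ℝ}
    (ht : t ∈ Set.Icc 0 T) : ε * (c * t - A) ≤ F t := by
  have := add_deriv_mul_add_sq_le S.contDiff_fst ht.1 (m := 0) fun _ hs ↦
    S.deriv2_fst_nonneg hc ⟨hs.1, hs.2.trans_le ht.2⟩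
  nlinarith [S.fst_zero, mul_le_mul_of_nonneg_right S.deriv_fst_zero ht.1]

theorem le_snd (S : AverageSystem ν σ p q r c A ε T F G) (hc : 0 ≤ c) {t : ℝ}
    (ht : t ∈ Set.Icc 0 T) : ε * (c * t - A) ≤ G t := by
  have := add_deriv_mul_add_sq_le S.contDiff_snd ht.1 (m := 0) fun _ hs ↦
    S.deriv2_snd_nonneg hc ⟨hs.1, hs.2.trans_le ht.2⟩
  nlinarith [S.snd_zero, mul_le_mul_of_nonneg_right S.deriv_snd_zero ht.1]

theorem snd_half_add_forcing_le (S : AverageSystem ν σ p q r c A ε T F G) (hc : 0 ≤ c)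
    (hε : 0 ≤ ε) {τ : ℝ} (hτ : τ ∈ Set.Icc 0 T) :
    G (τ / 2) + c * 2 ^ (-|σ|) * ε ^ r * (τ + 1) ^ σ * (τ ^ 2 / 8) ≤ G τ := by
  obtain ⟨hτ0, hτT⟩ := hτ
  have htaylor := add_deriv_mul_add_sq_le S.contDiff_snd (half_le_self hτ0)
    (m := c * ε ^ r * (2 ^ (-|σ|) * (τ + 1) ^ σ)) fun s hs ↦ le_trans
      (mul_le_mul_of_nonneg_left (two_rpow_neg_abs_mul_rpow_le σ (by linarith)
        (by linarith [hs.1]) (by linarith [hs.2])) (by positivity))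
      (S.forcing s ⟨by linarith [hs.1], by linarith [hs.2]⟩)
  have hderiv : 0 ≤ deriv G (τ / 2) * (τ - τ / 2) := mul_nonneg
    ((mul_nonneg hc hε).trans (S.le_deriv_snd hc ⟨by linarith, by linarith⟩)) (by linarith)
  linarith

theorem blowup_bound (S : AverageSystem ν σ p q r c A ε T F G) (hν : 0 ≤ ν) (hp : 1 ≤ p)
    (hq : 1 ≤ q) (hpq : 1 < p * q) (hc : 0 < c) (hε : 0 ≤ ε) {τ γ : ℝ} (hτ : 0 < τ)
    (hτT : 2 * τ ≤ T) (hF : 0 ≤ F τ) (hγ : 0 < γ) (hG : γ ≤ G τ) :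
    c ^ (1 + q) * (2 * (τ + 1)) ^ (-(ν * (p * q - 1))) * γ ^ (p * q - 1) *
      (τ ^ 2 / 32) ^ (q + 1) < 4 ^ ((q + 1) / (p * q - 1)) := by
  set m := 2 * (τ + 1)
  have hm : 0 < m := by positivity
  have hstate : KatoState F G γ τ :=
    ⟨hF, (by positivity : 0 ≤ c * ε).trans (S.le_deriv_fst hc.le ⟨hτ.le, by linarith⟩),
      (by positivity : 0 ≤ c * ε).trans (S.le_deriv_snd hc.le ⟨hτ.le, by linarith⟩), hG⟩
  have hsys := S.isKatoSystem (m := m) hν hp hq hc.le hτ.le hτT (by linarith)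
  have hgain := hstate.katoGain_lt hsys (by linarith) (by linarith) (by linarith) hpq
    (by positivity) (by positivity) hγ
  have hcoeff : c * m ^ (-(ν * (q - 1))) * (c * m ^ (-(ν * (p - 1)))) ^ q =
      c ^ (1 + q) * m ^ (-(ν * (p * q - 1))) := by
    rw [mul_rpow hc.le (by positivity), ← Real.rpow_mul hm.le, Real.rpow_add hc, Real.rpow_one,
      show -(ν * (p * q - 1)) = -(ν * (q - 1)) + -(ν * (p - 1)) * q by ring, Real.rpow_add hm]
    ring
  rw [katoGain, hcoeff] at hgain
  convert hgain using 3
  ring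

theorem eventually_le_snd (hr : 1 < r) (hc : 0 < c) :
    ∃ k > 0, ∀ᶠ ε : ℝ in Filter.atTop, ∀ T F G, 1 < T →
      AverageSystem ν σ p q r c A ε T F G → ∀ t ∈ Set.Icc (1 / 4) (1 / 2), k * ε ^ r ≤ G t := by
  set k := c * 2 ^ (-|σ|) * 2 ^ (-|σ|) / 256 with hk
  refine ⟨k, by positivity, ?_⟩
  filter_upwards [eventually_mul_le_mul_rpow_atTop A hr (show 0 < k by positivity),
    Filter.eventually_ge_atTop 0] with ε hA hε T F G hT S t ⟨ht₁, ht₂⟩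
  have hhalf := S.le_snd hc.le (t := t / 2) ⟨by linarith, by linarith⟩
  have hpow : (2 : ℝ) ^ (-|σ|) ≤ (t + 1) ^ σ := by
    simpa using two_rpow_neg_abs_mul_rpow_le σ one_pos (by linarith : (1 : ℝ) / 2 ≤ t + 1)
      (by linarith)
  have hforce : 2 * k * ε ^ r ≤ c * 2 ^ (-|σ|) * ε ^ r * (t + 1) ^ σ * (t ^ 2 / 8) :=
    calc 2 * k * ε ^ r = c * 2 ^ (-|σ|) * ε ^ r * 2 ^ (-|σ|) * ((1 / 4) ^ 2 / 8) := by
          rw [hk]; ring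
      _ ≤ _ := by gcongr
  nlinarith [S.snd_half_add_forcing_le hc.le hε (τ := t) ⟨by linarith, by linarith⟩,
    mul_nonneg hε (mul_nonneg hc.le (by linarith : 0 ≤ t / 2))]

theorem eventually_fst_nonneg (hν : 0 ≤ ν) (hp : 1 ≤ p) (hq : 1 ≤ q) (hr : 1 < r) (hc : 0 < c) :
    ∀ᶠ ε : ℝ in Filter.atTop, ∀ T F G, 1 < T →
      AverageSystem ν σ p q r c A ε T F G → 0 ≤ F (1 / 2) := by
  obtain ⟨k, hk, hG⟩ := eventually_le_snd (ν := ν) (σ := σ) (p := p) (q := q) (A := A) hr hc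
  set k' := c * 2 ^ (-(ν * (p - 1))) * k ^ p / 32 with hk'
  filter_upwards [hG, Filter.eventually_ge_atTop 0, eventually_mul_le_mul_rpow_atTop A
    (show 1 < r * p by nlinarith) (show 0 < k' by positivity)] with ε hG hε hA T F G hT S
  have hF := (S.isKatoSystem (a := 1 / 4) (b := 1 / 2) (m := 2) hν hp hq hc.le (by norm_num)
    (by linarith) (by norm_num)).le_deriv2_fst
  have htaylor := add_deriv_mul_add_sq_le S.contDiff_fst (a := 1 / 4) (b := 1 / 2) (by norm_num)
    (m := c * 2 ^ (-(ν * (p - 1))) * (k * ε ^ r) ^ p) fun t ht ↦ le_trans (by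
      gcongr
      exact (hG T F G hT S t ⟨ht.1.le, ht.2.le⟩).trans (le_abs_self _)) (hF t ht)
  rw [mul_rpow hk.le (by positivity), ← Real.rpow_mul hε] at htaylor
  have hstart := S.le_fst hc.le (t := 1 / 4) ⟨by norm_num, by linarith⟩
  have hslope := S.le_deriv_fst hc.le (t := 1 / 4) ⟨by norm_num, by linarith⟩
  rw [hk'] at hA
  nlinarith [mul_nonneg hε hc.le]

theorem eventually_not (hν : 0 ≤ ν) (hp : 1 ≤ p) (hq : 1 ≤ q) (hpq : 1 < p * q) (hr : 1 < r)
    (hc : 0 < c) :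
    ∀ᶠ ε : ℝ in Filter.atTop, ∀ T F G, 1 < T → ¬ AverageSystem ν σ p q r c A ε T F G := by
  obtain ⟨k, hk, hG⟩ := eventually_le_snd (ν := ν) (σ := σ) (p := p) (q := q) (A := A) hr hc
  set M := c ^ (1 + q) * 3 ^ (-(ν * (p * q - 1))) * k ^ (p * q - 1) *
    ((1 / 2) ^ 2 / 32) ^ (q + 1) with hM
  filter_upwards [hG, eventually_fst_nonneg hν hp hq hr hc, Filter.eventually_gt_atTop 0,
    (tendsto_rpow_atTop (show 0 < r * (p * q - 1) by nlinarith)).eventually_ge_atTop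
      (4 ^ ((q + 1) / (p * q - 1)) / M)] with ε hG hF hε hlarge T F G hT S
  have hblow := S.blowup_bound hν hp hq hpq hc hε.le (τ := 1 / 2) (by norm_num) (by linarith)
    (hF T F G hT S) (by positivity) (hG T F G hT S (1 / 2) (by norm_num))
  rw [div_le_iff₀ (by positivity), hM] at hlarge
  rw [mul_rpow hk.le (by positivity), ← Real.rpow_mul hε.le] at hblow
  norm_num at hblow hlarge
  linarith

theorem mul_rpow_le_snd (S : AverageSystem ν σ p q r c A ε T F G) (hc : 0 ≤ c) (hε : 0 ≤ ε) {τ : ℝ}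
    (hτ : 1 ≤ τ) (hτT : τ ≤ T) (hA : 2 * A ≤ c * τ) :
    c * 2 ^ (-|σ|) / 32 * ε ^ r * (τ + 1) ^ (σ + 2) ≤ G τ := by
  have hhalf : 0 ≤ G (τ / 2) := le_trans (mul_nonneg hε (by linarith))
    (S.le_snd hc (t := τ / 2) ⟨by linarith, by linarith⟩)
  calc c * 2 ^ (-|σ|) / 32 * ε ^ r * (τ + 1) ^ (σ + 2)
      = c * 2 ^ (-|σ|) * ε ^ r * (τ + 1) ^ σ * (((τ + 1) / 2) ^ 2 / 8) := by
        rw [Real.rpow_add (by positivity), Real.rpow_two]; ring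
    _ ≤ c * 2 ^ (-|σ|) * ε ^ r * (τ + 1) ^ σ * (τ ^ 2 / 8) := by gcongr; linarith
    _ ≤ G τ := by linarith [S.snd_half_add_forcing_le hc hε (τ := τ) ⟨by linarith, hτT⟩]

theorem blowup_bound_of_rpow_le (S : AverageSystem ν σ p q r c A ε T F G) (hν : 0 ≤ ν)
    (hp : 1 ≤ p) (hq : 1 ≤ q) (hpq : 1 < p * q) (hc : 0 < c) (hε : 0 < ε) {τ k : ℝ} (hτ : 1 ≤ τ)
    (hτT : 2 * τ ≤ T) (hF : 0 ≤ F τ) (hk : 0 < k) (hG : k * ε ^ r * (τ + 1) ^ (σ + 2) ≤ G τ) :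
    c ^ (1 + q) * 2 ^ (-(ν * (p * q - 1))) * k ^ (p * q - 1) * (1 / 128) ^ (q + 1) *
      (ε ^ (r * (p * q - 1)) * (τ + 1) ^ (2 * (q + 1) + (σ + 2 - ν) * (p * q - 1))) ≤
        4 ^ ((q + 1) / (p * q - 1)) := by
  have hblow := S.blowup_bound hν hp hq hpq hc hε.le (by linarith) hτT hF (by positivity) hG
  refine le_trans ?_ hblow.le
  set x := τ + 1
  have hx0 : 0 < x := by linarith
  have hsplit : x ^ (2 * (q + 1) + (σ + 2 - ν) * (p * q - 1)) =
      x ^ (-(ν * (p * q - 1))) * x ^ ((σ + 2) * (p * q - 1)) * x ^ (2 * (q + 1)) := by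
    rw [← Real.rpow_add hx0, ← Real.rpow_add hx0]
    congr 1
    ring
  calc _ = c ^ (1 + q) * (2 * x) ^ (-(ν * (p * q - 1))) * (k * ε ^ r * x ^ (σ + 2)) ^ (p * q - 1) *
            (x ^ 2 * (1 / 128)) ^ (q + 1) := by
        rw [hsplit, mul_rpow two_pos.le hx0.le, mul_rpow (by positivity) (by positivity),
          mul_rpow hk.le (by positivity), mul_rpow (by positivity) (by positivity),
          ← Real.rpow_mul hε.le, ← Real.rpow_mul hx0.le, ← Real.rpow_two, ← Real.rpow_mul hx0.le]
        ring
    _ ≤ _ := by gcongr; nlinarith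

theorem lifespan_le_of_long (hν : 0 ≤ ν) (hp : 1 ≤ p) (hq : 1 ≤ q) (hpq : 1 < p * q) (hc : 0 < c)
    (hD : 0 < 2 * (q + 1) + (σ + 2 - ν) * (p * q - 1)) :
    ∃ C > 0, ∀ ε T F G, 0 < ε → 4 * max 1 (2 * A / c) < T →
      AverageSystem ν σ p q r c A ε T F G →
      T ≤ C * ε ^ (-(r * (p * q - 1) / (2 * (q + 1) + (σ + 2 - ν) * (p * q - 1)))) := by
  set k := c * 2 ^ (-|σ|) / 32
  set K : ℝ := 4 ^ ((q + 1) / (p * q - 1))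
  set M := c ^ (1 + q) * 2 ^ (-(ν * (p * q - 1))) * k ^ (p * q - 1) * (1 / 128) ^ (q + 1)
  refine ⟨4 * (K / M) ^ (1 / (2 * (q + 1) + (σ + 2 - ν) * (p * q - 1))), by positivity,
    fun ε T F G hε hT S ↦ ?_⟩
  obtain ⟨τ, rfl⟩ : ∃ τ, T = 4 * τ := ⟨T / 4, by ring⟩
  obtain ⟨hτ, hA⟩ : 1 < τ ∧ 2 * A / c < τ := max_lt_iff.1 (lt_of_mul_lt_mul_left hT (by norm_num))
  rw [div_lt_iff₀' hc] at hA
  have hF : 0 ≤ F τ := le_trans (mul_nonneg hε.le (by nlinarith))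
    (S.le_fst hc.le (t := τ) ⟨by linarith, by linarith⟩)
  have hG := S.mul_rpow_le_snd hc.le hε.le hτ.le (by linarith) hA.le
  have hM := S.blowup_bound_of_rpow_le hν hp hq hpq hc hε hτ.le (by linarith) hF (by positivity) hG
  linarith [le_rpow_mul_rpow_of_mul_le (by positivity) hD (by positivity) hε hM]

theorem exists_lifespan_le (hν : 0 ≤ ν) (hp : 1 ≤ p) (hq : 1 ≤ q) (hpq : 1 < p * q) (hr : 1 < r)
    (hc : 0 < c) (hD : 0 < 2 * (q + 1) + (σ + 2 - ν) * (p * q - 1)) :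
    ∃ C > 0, ∀ ε T F G, 0 < ε → 1 < T → AverageSystem ν σ p q r c A ε T F G →
      T ≤ C * ε ^ (-(r * (p * q - 1) / (2 * (q + 1) + (σ + 2 - ν) * (p * q - 1)))) := by
  obtain ⟨C, hC, hlong⟩ := lifespan_le_of_long (r := r) (A := A) hν hp hq hpq hc hD
  obtain ⟨ε₀, hε₀⟩ := Filter.eventually_atTop.1 <|
    eventually_not (σ := σ) (A := A) hν hp hq hpq hr hc
  set κ := r * (p * q - 1) / (2 * (q + 1) + (σ + 2 - ν) * (p * q - 1))
  set T₀ := 4 * max 1 (2 * A / c)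
  refine ⟨max C (T₀ * ε₀ ^ κ), lt_max_of_lt_left hC, fun ε T F G hε hT S ↦ ?_⟩
  have hεε₀ : ε < ε₀ := by
    by_contra! h
    exact hε₀ ε h T F G hT S
  rcases lt_or_ge T₀ T with h | h
  · exact (hlong ε T F G hε h S).trans (by gcongr; exact le_max_left _ _)
  · have hκ : 0 ≤ κ := div_nonneg (mul_nonneg (by linarith) (by linarith)) hD.le
    calc T ≤ T₀ * ε ^ κ * ε ^ (-κ) := by
          rwa [mul_assoc, ← Real.rpow_add hε, add_neg_cancel, Real.rpow_zero, mul_one]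
      _ ≤ T₀ * ε₀ ^ κ * ε ^ (-κ) := by
        have := rpow_le_rpow hε.le hεε₀.le hκ
        gcongr
      _ ≤ max C (T₀ * ε₀ ^ κ) * ε ^ (-κ) := by gcongr; exact le_max_right _ _

end AverageSystem

/-! ### Hölder's inequality on balls -/

section Holder

variable {α : Type*} {mα : MeasurableSpace α} {μ : Measure α} {h ψ : α → ℝ} {r : ℝ}

theorem abs_integral_rpow_le [IsFiniteMeasure μ] (hr : 1 ≤ r) (hh : Integrable h μ)
    (hhr : Integrable (fun x ↦ |h x| ^ r) μ) :
    |∫ x, h x ∂μ| ^ r ≤ μ.real Set.univ ^ (r - 1) * ∫ x, |h x| ^ r ∂μ := by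
  rcases eq_zero_or_neZero μ with rfl | hμ
  · simp [Real.zero_rpow (by linarith : r ≠ 0)]
  have hmass : 0 < μ.real Set.univ := measureReal_univ_pos
  have hjensen := (convexOn_rpow hr).map_average_le
    (Real.continuous_rpow_const (by linarith)).continuousOn isClosed_Ici
    (Filter.Eventually.of_forall fun x ↦ abs_nonneg (h x)) hh.abs hhr
  rw [average_eq, average_eq, smul_eq_mul, smul_eq_mul,
    mul_rpow (by positivity) (integral_nonneg fun x ↦ abs_nonneg _), inv_rpow hmass.le] at hjensen
  calc |∫ x, h x ∂μ| ^ r ≤ (∫ x, |h x| ∂μ) ^ r := by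
        gcongr; exact abs_integral_le_integral_abs
    _ ≤ μ.real Set.univ ^ r * ((μ.real Set.univ)⁻¹ * ∫ x, |h x| ^ r ∂μ) :=
        (inv_mul_le_iff₀ (by positivity)).1 hjensen
    _ = μ.real Set.univ ^ (r - 1) * ∫ x, |h x| ^ r ∂μ := by
        rw [rpow_sub_one hmass.ne', div_eq_mul_inv, mul_assoc]

theorem abs_integral_mul_rpow_le (hr : 1 ≤ r) (hψ : Integrable ψ μ) (hψ0 : ∀ x, 0 ≤ ψ x)
    (hh : Integrable (fun x ↦ ψ x * h x) μ) (hhr : Integrable (fun x ↦ ψ x * |h x| ^ r) μ) :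
    |∫ x, ψ x * h x ∂μ| ^ r ≤ (∫ x, ψ x ∂μ) ^ (r - 1) * ∫ x, ψ x * |h x| ^ r ∂μ := by
  have hmeas := hψ.aestronglyMeasurable.aemeasurable.ennreal_ofReal
  have hlt : ∀ᵐ x ∂μ, ENNReal.ofReal (ψ x) < ⊤ :=
    Filter.Eventually.of_forall fun _ ↦ ofReal_lt_top
  have hintegral (k : α → ℝ) :
      ∫ x, k x ∂μ.withDensity (fun x ↦ ENNReal.ofReal (ψ x)) = ∫ x, ψ x * k x ∂μ := by
    simp [integral_withDensity_eq_integral_toReal_smul₀ hmeas hlt, toReal_ofReal, hψ0]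
  have hintegrable {k : α → ℝ} (hk : Integrable (fun x ↦ ψ x * k x) μ) :
      Integrable k (μ.withDensity fun x ↦ ENNReal.ofReal (ψ x)) := by
    rw [integrable_withDensity_iff_integrable_smul₀' hmeas hlt]
    simpa [toReal_ofReal, hψ0] using hk
  have := isFiniteMeasure_withDensity_ofReal hψ.hasFiniteIntegral
  have hmass : (μ.withDensity fun x ↦ ENNReal.ofReal (ψ x)).real Set.univ = ∫ x, ψ x ∂μ := by
    simpa using hintegral 1
  have hmain := abs_integral_rpow_le hr (hintegrable hh) (hintegrable hhr)
  rwa [hintegral, hintegral, hmass] at hmain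

variable {E : Type*} [NormedAddCommGroup E] [NormedSpace ℝ E] [FiniteDimensional ℝ E]
  [MeasurableSpace E] [BorelSpace E] {f : E → ℝ}

theorem integrableOn_closedBall_of_continuous {ν : Measure E} [IsFiniteMeasureOnCompacts ν]
    (hf : Continuous f) (R : ℝ) : IntegrableOn f (Metric.closedBall 0 R) ν :=
  hf.continuousOn.integrableOn_compact (isCompact_closedBall 0 R)

theorem abs_setIntegral_closedBall_rpow_le (ν : Measure E) [ν.IsAddHaarMeasure]
    (hr : 1 ≤ r) (hf : Continuous f) {R : ℝ} (hR : 0 ≤ R) :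
    |∫ x in Metric.closedBall 0 R, f x ∂ν| ^ r ≤
      (R ^ Module.finrank ℝ E * ν.real (Metric.ball 0 1)) ^ (r - 1) *
        ∫ x in Metric.closedBall 0 R, |f x| ^ r ∂ν := by
  have : IsFiniteMeasure (ν.restrict (Metric.closedBall 0 R)) :=
    isFiniteMeasure_restrict.2 measure_closedBall_lt_top.ne
  have := abs_integral_rpow_le hr (integrableOn_closedBall_of_continuous (ν := ν) hf R)
    (integrableOn_closedBall_of_continuous (hf.abs.rpow_const fun _ ↦ Or.inr (by linarith)) R)
  rwa [measureReal_restrict_apply_univ, Measure.addHaar_real_closedBall ν 0 hR] at this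

theorem abs_setIntegral_closedBall_mul_rpow_le {ν : Measure E} [IsFiniteMeasureOnCompacts ν]
    {ψ : E → ℝ} {A B R : ℝ} (hr : 1 ≤ r) (hf : Continuous f) (hψ : Continuous ψ)
    (hψ0 : ∀ x, 0 ≤ ψ x) (hA : ∀ x ∈ Metric.closedBall 0 R, ψ x ≤ A)
    (hB : ∫ x in Metric.closedBall 0 R, ψ x ∂ν ≤ B) :
    |∫ x in Metric.closedBall 0 R, ψ x * f x ∂ν| ^ r ≤
      B ^ (r - 1) * (A * ∫ x in Metric.closedBall 0 R, |f x| ^ r ∂ν) := by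
  have hint {k : E → ℝ} (hk : Continuous k) : IntegrableOn k (Metric.closedBall 0 R) ν :=
    integrableOn_closedBall_of_continuous hk R
  have hfr : Continuous fun x ↦ |f x| ^ r := hf.abs.rpow_const fun _ ↦ Or.inr (by linarith)
  refine (abs_integral_mul_rpow_le hr (hint hψ) hψ0 (hint (hψ.mul hf))
    (hint (hψ.mul hfr))).trans ?_
  have hmul : ∫ x in Metric.closedBall 0 R, ψ x * |f x| ^ r ∂ν ≤
      A * ∫ x in Metric.closedBall 0 R, |f x| ^ r ∂ν := by
    rw [← integral_const_mul]
    refine setIntegral_mono_on (hint (hψ.mul hfr)) ((hint hfr).const_mul A)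
      Metric.isClosed_closedBall.measurableSet fun x hx ↦ ?_
    gcongr
    exact hA x hx
  have hψint : 0 ≤ ∫ x in Metric.closedBall 0 R, ψ x ∂ν := integral_nonneg hψ0
  exact mul_le_mul (Real.rpow_le_rpow hψint hB (by linarith)) hmul
    (integral_nonneg fun x ↦ mul_nonneg (hψ0 x) (by positivity))
    (Real.rpow_nonneg (hψint.trans hB) _)

end Holder

/-! ### A weight concentrated on the light cone -/

section LightCone

open Module Metric
open scoped RealInnerProductSpace

variable {E : Type*} [NormedAddCommGroup E] {ι : Type*} [Fintype ι] {d : ℕ} {b s t : ℝ}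

/-- The shell of frequencies `b / 2 ≤ ‖ξ‖ ≤ b`; staying away from `ξ = 0` makes the superposition of
waves below decay away from the light cone. -/
def frequencyShell (b : ℝ) : Set E := closedBall 0 b \ ball 0 (b / 2)

theorem mem_frequencyShell {ξ : E} : ξ ∈ frequencyShell b ↔ ‖ξ‖ ≤ b ∧ b / 2 ≤ ‖ξ‖ := by
  simp [frequencyShell]

theorem isCompact_frequencyShell [ProperSpace E] (b : ℝ) : IsCompact (frequencyShell b : Set E) :=
  (isCompact_closedBall _ _).diff isOpen_ball

variable [InnerProductSpace ℝ E]

theorem exp_neg_sum_mul_inner_sq (B : OrthonormalBasis ι ℝ E) (c : ι → ℝ) (ξ : E) :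
    exp (-∑ i, c i * ⟪B i, ξ⟫ ^ 2) = ∏ i, exp (-c i * (B.repr ξ).ofLp i ^ 2) := by
  simp_rw [← exp_sum, ← Finset.sum_neg_distrib, neg_mul, B.repr_apply_apply]

/-- The phase `‖ξ‖ R - ⟪ξ, x⟫`, with `L = ‖ξ‖`, `ρ = ‖x‖` and `y` the component of `ξ` along `x`,
controls both the distance of `x` to the sphere of radius `R` and the part of `ξ` orthogonal to
`x`. -/
theorem mul_sub_add_mul_sq_sub_sq_le {L R ρ y : ℝ} (hb : 0 < b) (hbL : b / 2 ≤ L) (hLb : L ≤ b)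
    (hρ : 0 ≤ ρ) (hρR : ρ ≤ R) (hy : |y| ≤ L) :
    b / 4 * (R - ρ) + R / (4 * b) * (L ^ 2 - y ^ 2) ≤ L * R - ρ * y := by
  have hy_le : y ≤ L := (le_abs_self y).trans hy
  have hlong : (L ^ 2 - y ^ 2) / (4 * b) ≤ L - y := by
    rw [div_le_iff₀ (by positivity)]
    nlinarith
  have hshort : (L ^ 2 - y ^ 2) / (4 * b) ≤ b / 4 := by
    rw [div_le_iff₀ (by positivity)]
    nlinarith
  calc b / 4 * (R - ρ) + R / (4 * b) * (L ^ 2 - y ^ 2)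
      = b / 4 * (R - ρ) + (ρ * ((L ^ 2 - y ^ 2) / (4 * b))
          + (R - ρ) * ((L ^ 2 - y ^ 2) / (4 * b))) := by ring
    _ ≤ b / 4 * (R - ρ) + (ρ * (L - y) + (R - ρ) * (b / 4)) := by gcongr
    _ ≤ L * R - ρ * y := by nlinarith [mul_le_mul_of_nonneg_right hbL (sub_nonneg.2 hρR)]

theorem exp_inner_sub_le {e ξ : E} {ρ : ℝ} (hb : 0 < b) (he : ‖e‖ = 1) (hρ : 0 ≤ ρ)
    (hρt : ρ ≤ t + 1) (hξ : ξ ∈ frequencyShell b) :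
    exp (⟪ξ, ρ • e⟫ - ‖ξ‖ * t) ≤ exp (b + b ^ 2) * exp (-(b / 4 * (t + 1 - ρ))) *
      exp (-(⟪e, ξ⟫ ^ 2 + (t + 1) / (4 * b) * (‖ξ‖ ^ 2 - ⟪e, ξ⟫ ^ 2))) := by
  obtain ⟨hξb, hbξ⟩ := mem_frequencyShell.1 hξ
  have hy : |⟪e, ξ⟫| ≤ ‖ξ‖ := by simpa [he] using abs_real_inner_le_norm e ξ
  have hphase := mul_sub_add_mul_sq_sub_sq_le hb hbξ hξb hρ hρt hy
  have hy₂ : ⟪e, ξ⟫ ^ 2 ≤ b ^ 2 := sq_le_sq.2 ((hy.trans hξb).trans (le_abs_self b))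
  rw [← Real.exp_add, ← Real.exp_add, exp_le_exp, real_inner_smul_right, real_inner_comm]
  linarith

variable [FiniteDimensional ℝ E]

theorem exists_orthonormalBasis_apply_zero_eq (hE : finrank ℝ E = d + 1) {e : E} (he : ‖e‖ = 1) :
    ∃ B : OrthonormalBasis (Fin (d + 1)) ℝ E, B 0 = e := by
  obtain ⟨B, hB⟩ := Orthonormal.exists_orthonormalBasis_extension_of_card_eq (𝕜 := ℝ)
    (ι := Fin (d + 1)) (by simpa using hE) (v := fun _ ↦ e) (s := {0})
    ⟨fun _ ↦ he, fun i j hij ↦ (hij (Subsingleton.elim i j)).elim⟩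
  exact ⟨B, hB 0 rfl⟩

variable [MeasurableSpace E] [BorelSpace E]

theorem integrable_exp_neg_sum_mul_inner_sq (B : OrthonormalBasis ι ℝ E) {c : ι → ℝ}
    (hc : ∀ i, 0 < c i) : Integrable fun ξ ↦ exp (-∑ i, c i * ⟪B i, ξ⟫ ^ 2) := by
  have hprod : Integrable fun y : ι → ℝ ↦ ∏ i, exp (-c i * y i ^ 2) :=
    Integrable.fintype_prod fun i ↦ integrable_exp_neg_mul_sq (hc i)
  simp_rw [exp_neg_sum_mul_inner_sq]
  exact ((PiLp.volume_preserving_ofLp ι).comp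
    B.measurePreserving_repr).integrable_comp_of_integrable hprod

theorem integral_exp_neg_sum_mul_inner_sq (B : OrthonormalBasis ι ℝ E) (c : ι → ℝ) :
    ∫ ξ, exp (-∑ i, c i * ⟪B i, ξ⟫ ^ 2) = ∏ i, √(π / c i) := by
  simp_rw [exp_neg_sum_mul_inner_sq, ← integral_gaussian]
  rw [← integral_fintype_prod_volume_eq_prod fun i (y : ℝ) ↦ exp (-c i * y ^ 2)]
  exact ((PiLp.volume_preserving_ofLp ι).comp B.measurePreserving_repr).integral_comp
    ((MeasurableEquiv.toLp 2 (ι → ℝ)).symm.measurableEmbedding.comp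
      B.measurableEquiv.measurableEmbedding) fun y ↦ ∏ i, exp (-c i * y i ^ 2)

theorem integral_exp_neg_anisotropic (hE : finrank ℝ E = d + 1) (hs : 0 < s) {e : E}
    (he : ‖e‖ = 1) :
    Integrable (fun ξ ↦ exp (-(⟪e, ξ⟫ ^ 2 + s * (‖ξ‖ ^ 2 - ⟪e, ξ⟫ ^ 2)))) ∧
      ∫ ξ, exp (-(⟪e, ξ⟫ ^ 2 + s * (‖ξ‖ ^ 2 - ⟪e, ξ⟫ ^ 2))) = √π * √(π / s) ^ d := by
  obtain ⟨B, rfl⟩ := exists_orthonormalBasis_apply_zero_eq hE he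
  have hform (ξ : E) : ⟪B 0, ξ⟫ ^ 2 + s * (‖ξ‖ ^ 2 - ⟪B 0, ξ⟫ ^ 2) =
      ∑ i, (Fin.cons 1 fun _ ↦ s : Fin (d + 1) → ℝ) i * ⟪B i, ξ⟫ ^ 2 := by
    simp [← B.sum_sq_inner_right ξ, Fin.sum_univ_succ, Finset.mul_sum]
  simp_rw [hform]
  refine ⟨integrable_exp_neg_sum_mul_inner_sq B (Fin.cases one_pos fun _ ↦ hs), ?_⟩
  simp [integral_exp_neg_sum_mul_inner_sq, Fin.prod_univ_succ]

theorem measureReal_frequencyShell_pos [Nontrivial E] (hb : 0 < b) :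
    0 < volume.real (frequencyShell b : Set E) := by
  obtain ⟨e, he⟩ := exists_norm_eq E (by positivity : 0 ≤ 3 * b / 4)
  have hsub : ball e (b / 4) ⊆ frequencyShell b := fun ξ hξ ↦ by
    rw [mem_ball_iff_norm] at hξ
    have h₁ := norm_sub_norm_le ξ e
    have h₂ := norm_sub_norm_le e ξ
    rw [norm_sub_rev] at h₂
    exact mem_frequencyShell.2 ⟨by linarith, by linarith⟩
  exact toReal_pos (measure_pos_of_superset hsub (measure_ball_pos _ _ (by positivity)).ne').ne'
    (isCompact_frequencyShell b).measure_lt_top.ne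

/-- The superposition over a frequency shell of the exponential solutions `exp (⟪ξ, x⟫ - ‖ξ‖ t)` of
the wave equation. It is the weight against which solutions are tested in place of a single
exponential. -/
noncomputable def lightConeWeight (b t : ℝ) (x : E) : ℝ :=
  ∫ ξ in frequencyShell b, exp (⟪ξ, x⟫ - ‖ξ‖ * t)

theorem lightConeWeight_nonneg (x : E) : 0 ≤ lightConeWeight b t x :=
  integral_nonneg fun _ ↦ (exp_pos _).le

theorem continuous_lightConeWeight : Continuous (lightConeWeight b t : E → ℝ) :=
  continuous_parametric_integral_of_continuous (f := fun x ξ : E ↦ exp (⟪ξ, x⟫ - ‖ξ‖ * t))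
    (by fun_prop) (isCompact_frequencyShell b)

theorem sqrt_pi_div_div_pow {R : ℝ} (hR : 0 < R) :
    √(π / (R / (4 * b))) ^ d = √(π * (4 * b)) ^ d * R ^ (-((d : ℝ) / 2)) := by
  rw [div_div_eq_mul_div, sqrt_div' _ hR.le, div_pow, rpow_neg hR.le, div_eq_mul_inv,
    rpow_div_two_eq_sqrt _ hR.le, Real.rpow_natCast]

/-- The shell contributes a Gaussian of width `t ^ (-1 / 2)` in the `d` directions orthogonal to
`x`. -/
theorem exists_lightConeWeight_le (hE : finrank ℝ E = d + 1) (hb : 0 < b) :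
    ∃ C > 0, ∀ t : ℝ, 0 ≤ t → ∀ x : E, ‖x‖ ≤ t + 1 → lightConeWeight b t x ≤
      C * (t + 1) ^ (-((d : ℝ) / 2)) * exp (-(b / 4 * (t + 1 - ‖x‖))) := by
  have := nontrivial_of_finrank_eq_succ hE
  refine ⟨exp (b + b ^ 2) * √π * √(π * (4 * b)) ^ d, by positivity, fun t ht x hx ↦ ?_⟩
  obtain ⟨e, he, hxe⟩ : ∃ e : E, ‖e‖ = 1 ∧ x = ‖x‖ • e := by
    rcases eq_or_ne x 0 with rfl | hx₀
    · simpa using exists_norm_eq E zero_le_one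
    · exact ⟨_, NormedSpace.norm_normalize_eq_one_iff.2 hx₀,
        (NormedSpace.norm_smul_normalize x).symm⟩
  obtain ⟨hint, hval⟩ := integral_exp_neg_anisotropic hE (s := (t + 1) / (4 * b)) (by positivity) he
  set K := exp (b + b ^ 2) * exp (-(b / 4 * (t + 1 - ‖x‖)))
  calc lightConeWeight b t x
      ≤ ∫ ξ in frequencyShell b,
          K * exp (-(⟪e, ξ⟫ ^ 2 + (t + 1) / (4 * b) * (‖ξ‖ ^ 2 - ⟪e, ξ⟫ ^ 2))) := by
        refine setIntegral_mono_on ?_ (hint.const_mul K).integrableOn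
          (isCompact_frequencyShell b).measurableSet fun ξ hξ ↦ ?_
        · exact (Continuous.continuousOn (by fun_prop)).integrableOn_compact
            (isCompact_frequencyShell b)
        · conv_lhs => rw [hxe]
          exact exp_inner_sub_le hb he (norm_nonneg x) hx hξ
    _ ≤ ∫ ξ, K * exp (-(⟪e, ξ⟫ ^ 2 + (t + 1) / (4 * b) * (‖ξ‖ ^ 2 - ⟪e, ξ⟫ ^ 2))) :=
        setIntegral_le_integral (hint.const_mul K) (.of_forall fun ξ ↦ by positivity)
    _ = _ := by
        rw [integral_const_mul, hval, sqrt_pi_div_div_pow (by positivity)]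
        ring

theorem intervalIntegral_exp_neg_mul_sub_le {c : ℝ} (hc : 0 < c) (R : ℝ) :
    ∫ y in (0 : ℝ)..R, exp (-(c * (R - y))) ≤ 1 / c := by
  have hderiv (y : ℝ) : HasDerivAt (fun y ↦ exp (-(c * (R - y))) / c) (exp (-(c * (R - y)))) y := by
    have h := ((((hasDerivAt_id y).const_sub R).const_mul c).neg.exp).div_const c
    exact h.congr_deriv (by simp; field_simp)
  rw [intervalIntegral.integral_eq_sub_of_hasDerivAt (fun y _ ↦ hderiv y)
    (Continuous.intervalIntegrable (by fun_prop) _ _)]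
  calc exp (-(c * (R - R))) / c - exp (-(c * (R - 0))) / c ≤ exp (-(c * (R - R))) / c :=
        sub_le_self _ (by positivity)
    _ = 1 / c := by simp

theorem setIntegral_closedBall_exp_neg_mul_sub_norm_le (hE : finrank ℝ E = d + 1) {c R : ℝ}
    (hc : 0 < c) (hR : 0 ≤ R) :
    ∫ x in closedBall (0 : E) R, exp (-(c * (R - ‖x‖))) ≤
      (d + 1) * volume.real (ball (0 : E) 1) / c * R ^ d := by
  have := nontrivial_of_finrank_eq_succ hE
  have hradial : ∫ y in (0 : ℝ)..R, y ^ d * exp (-(c * (R - y))) ≤ R ^ d * (1 / c) := calc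
    _ ≤ ∫ y in (0 : ℝ)..R, R ^ d * exp (-(c * (R - y))) := by
        refine intervalIntegral.integral_mono_on hR
          (Continuous.intervalIntegrable (by fun_prop) _ _)
          (Continuous.intervalIntegrable (by fun_prop) _ _) fun y hy ↦ ?_
        gcongr
        exacts [hy.1, hy.2]
    _ ≤ R ^ d * (1 / c) := by
        rw [intervalIntegral.integral_const_mul]
        gcongr
        exact intervalIntegral_exp_neg_mul_sub_le hc R
  calc ∫ x in closedBall (0 : E) R, exp (-(c * (R - ‖x‖)))
      = ∫ x : E, (Set.Iic R).indicator (fun y ↦ exp (-(c * (R - y)))) ‖x‖ := by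
        rw [← integral_indicator measurableSet_closedBall]
        simp [Set.indicator]
    _ = (d + 1) * volume.real (ball (0 : E) 1) *
          ∫ y in (0 : ℝ)..R, y ^ d * exp (-(c * (R - y))) := by
        rw [integral_fun_norm_addHaar, intervalIntegral.integral_of_le hR, ← Set.Ioi_inter_Iic,
          ← setIntegral_indicator measurableSet_Iic]
        simp [hE, Set.indicator_mul_right, mul_assoc]
    _ ≤ (d + 1) * volume.real (ball (0 : E) 1) * (R ^ d * (1 / c)) := by gcongr
    _ = (d + 1) * volume.real (ball (0 : E) 1) / c * R ^ d := by ring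

theorem exists_lightConeWeight_bounds (hE : finrank ℝ E = d + 1) (hb : 0 < b) :
    ∃ C > 0, ∀ t : ℝ, 0 ≤ t →
      (∀ x ∈ closedBall (0 : E) (t + 1), lightConeWeight b t x ≤ C * (t + 1) ^ (-((d : ℝ) / 2))) ∧
      ∫ x in closedBall (0 : E) (t + 1), lightConeWeight b t x ≤ C * (t + 1) ^ ((d : ℝ) / 2) := by
  obtain ⟨C, hC, hle⟩ := exists_lightConeWeight_le hE hb
  have := nontrivial_of_finrank_eq_succ hE
  set D := (d + 1) * volume.real (ball (0 : E) 1) / (b / 4)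
  refine ⟨max C (C * D), by positivity, fun t ht ↦ ⟨fun x hx ↦ ?_, ?_⟩⟩
  · rw [mem_closedBall_zero_iff] at hx
    calc lightConeWeight b t x
        ≤ C * (t + 1) ^ (-((d : ℝ) / 2)) * exp (-(b / 4 * (t + 1 - ‖x‖))) := hle t ht x hx
      _ ≤ C * (t + 1) ^ (-((d : ℝ) / 2)) :=
          mul_le_of_le_one_right (by positivity)
            (exp_le_one_iff.2 (neg_nonpos.2 (mul_nonneg (by positivity) (sub_nonneg.2 hx))))
      _ ≤ max C (C * D) * (t + 1) ^ (-((d : ℝ) / 2)) := by gcongr; exact le_max_left _ _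
  · calc ∫ x in closedBall (0 : E) (t + 1), lightConeWeight b t x
        ≤ ∫ x in closedBall (0 : E) (t + 1),
            C * (t + 1) ^ (-((d : ℝ) / 2)) * exp (-(b / 4 * (t + 1 - ‖x‖))) :=
          setIntegral_mono_on (integrableOn_closedBall_of_continuous continuous_lightConeWeight _)
            (integrableOn_closedBall_of_continuous (by fun_prop) _) measurableSet_closedBall
            fun x hx ↦ hle t ht x (mem_closedBall_zero_iff.1 hx)
      _ ≤ C * (t + 1) ^ (-((d : ℝ) / 2)) * (D * (t + 1) ^ d) := by
          rw [integral_const_mul]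
          gcongr
          exact setIntegral_closedBall_exp_neg_mul_sub_norm_le hE (by positivity) (by positivity)
      _ = C * D * (t + 1) ^ ((d : ℝ) / 2) := by
          have hpow : (t + 1) ^ ((d : ℝ) / 2) = (t + 1) ^ (-((d : ℝ) / 2)) * (t + 1) ^ d := by
            rw [← Real.rpow_natCast, ← Real.rpow_add (by positivity)]
            ring_nf
          rw [hpow]
          ring
      _ ≤ max C (C * D) * (t + 1) ^ ((d : ℝ) / 2) := by gcongr; exact le_max_right _ _

theorem integral_lightConeWeight_mul {h : E → ℝ} (hh : Continuous h) (b t R : ℝ) :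
    ∫ x in closedBall (0 : E) R, lightConeWeight b t x * h x =
      ∫ ξ in frequencyShell b, exp (-(‖ξ‖ * t)) *
        ∫ x in closedBall (0 : E) R, h x * exp ⟪ξ, x⟫ := by
  have hc : Continuous (Function.uncurry fun x ξ : E ↦ exp (⟪ξ, x⟫ - ‖ξ‖ * t) * h x) := by
    unfold Function.uncurry
    fun_prop
  simp only [lightConeWeight, ← integral_const_mul, ← integral_mul_const]
  rw [integral_integral_swap]
  · refine integral_congr_ae (.of_forall fun ξ ↦ integral_congr_ae (.of_forall fun x ↦ ?_))
    simp only [sub_eq_add_neg, Real.exp_add]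
    ring
  · rw [Measure.prod_restrict]
    exact hc.continuousOn.integrableOn_compact
      ((isCompact_closedBall _ _).prod (isCompact_frequencyShell b))

theorem measureReal_mul_le_integral_lightConeWeight_mul {h : E → ℝ} {J R : ℝ} (hh : Continuous h)
    (hJ : ∀ ξ : E, ‖ξ‖ ≤ b →
      J ≤ exp (-(‖ξ‖ * t)) * ∫ x in closedBall 0 R, h x * exp ⟪ξ, x⟫) :
    volume.real (frequencyShell b : Set E) * J ≤
      ∫ x in closedBall (0 : E) R, lightConeWeight b t x * h x := by
  have hcompact := isCompact_frequencyShell (E := E) b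
  have hmoment : Continuous fun ξ : E ↦ ∫ x in closedBall (0 : E) R, h x * exp ⟪ξ, x⟫ :=
    continuous_parametric_integral_of_continuous (f := fun ξ x : E ↦ h x * exp ⟪ξ, x⟫)
      (by fun_prop) (isCompact_closedBall _ _)
  rw [integral_lightConeWeight_mul hh, ← smul_eq_mul, ← setIntegral_const]
  exact setIntegral_mono_on (continuousOn_const.integrableOn_compact hcompact)
    ((Continuous.continuousOn (by fun_prop)).integrableOn_compact hcompact) hcompact.measurableSet
    fun ξ hξ ↦ hJ ξ (mem_frequencyShell.1 hξ).1

/-- A single frequency in place of the shell would not give this power of `t + 1`. -/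
theorem exists_le_setIntegral_abs_rpow (hE : finrank ℝ E = d + 1) (hb : 0 < b) :
    ∃ c > 0, ∀ (r t J : ℝ) (h : E → ℝ), 1 ≤ r → 0 ≤ t → 0 ≤ J → Continuous h →
      (∀ ξ : E, ‖ξ‖ ≤ b →
        J ≤ exp (-(‖ξ‖ * t)) * ∫ x in closedBall 0 (t + 1), h x * exp ⟪ξ, x⟫) →
      (c * J) ^ r * (t + 1) ^ ((d : ℝ) * (1 - r / 2)) ≤ ∫ x in closedBall 0 (t + 1), |h x| ^ r := by
  have := nontrivial_of_finrank_eq_succ hE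
  obtain ⟨C, hC, hW⟩ := exists_lightConeWeight_bounds hE hb
  set V := volume.real (frequencyShell b : Set E)
  have hV : 0 < V := measureReal_frequencyShell_pos hb
  refine ⟨V / C, by positivity, fun r t J h hr ht hJ hh hmom ↦ ?_⟩
  obtain ⟨hW_le, hW_int⟩ := hW t ht
  set I := ∫ x in closedBall 0 (t + 1), |h x| ^ r
  set ρ := t + 1
  have hρ : 0 < ρ := by positivity
  have hholder : (V * J) ^ r ≤ (C * ρ ^ ((d : ℝ) / 2)) ^ (r - 1) * (C * ρ ^ (-((d : ℝ) / 2)) * I) :=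
    calc
      (V * J) ^ r ≤ |∫ x in closedBall 0 ρ, lightConeWeight b t x * h x| ^ r := by
        gcongr
        exact (measureReal_mul_le_integral_lightConeWeight_mul hh hmom).trans (le_abs_self _)
      _ ≤ _ := abs_setIntegral_closedBall_mul_rpow_le hr hh continuous_lightConeWeight
          lightConeWeight_nonneg hW_le hW_int
  have hpow : (C * ρ ^ ((d : ℝ) / 2)) ^ (r - 1) * (C * ρ ^ (-((d : ℝ) / 2))) *
      ρ ^ ((d : ℝ) * (1 - r / 2)) = C ^ r := by
    rw [mul_rpow hC.le (by positivity), ← Real.rpow_mul hρ.le, mul_mul_mul_comm,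
      ← rpow_add_one hC.ne', sub_add_cancel, mul_assoc, ← Real.rpow_add hρ, ← Real.rpow_add hρ,
      show (d : ℝ) / 2 * (r - 1) + -((d : ℝ) / 2) + d * (1 - r / 2) = 0 by ring, Real.rpow_zero,
      mul_one]
  rw [div_mul_eq_mul_div, div_rpow (by positivity) hC.le, div_mul_eq_mul_div,
    div_le_iff₀ (by positivity), ← hpow]
  calc (V * J) ^ r * ρ ^ ((d : ℝ) * (1 - r / 2))
      ≤ (C * ρ ^ ((d : ℝ) / 2)) ^ (r - 1) * (C * ρ ^ (-((d : ℝ) / 2)) * I) *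
          ρ ^ ((d : ℝ) * (1 - r / 2)) := by gcongr
    _ = _ := by ring

end LightCone

/-! ### Exponential moments -/

section ExpMoment

open Metric
open scoped RealInnerProductSpace

section Data

variable {E : Type*} [NormedAddCommGroup E] [InnerProductSpace ℝ E] [FiniteDimensional ℝ E]
  [MeasurableSpace E] [BorelSpace E] {f g : E → ℝ}

theorem continuous_integral_mul_exp_inner (hf : Continuous f) (hfc : HasCompactSupport f) :
    Continuous fun ξ : E ↦ ∫ x, f x * exp ⟪ξ, x⟫ := by
  refine (continuous_parametric_integral_of_continuous (μ := volume)
    (f := fun ξ x : E ↦ f x * exp ⟪ξ, x⟫) (by fun_prop) hfc).congr fun ξ ↦ ?_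
  refine setIntegral_eq_integral_of_forall_compl_eq_zero fun x hx ↦ ?_
  rw [image_eq_zero_of_notMem_tsupport hx, zero_mul]

theorem exists_half_integral_add_le_integral_mul_exp_inner (hf : Continuous f)
    (hfc : HasCompactSupport f) (hg : Continuous g) (hgc : HasCompactSupport g)
    (hpos : 0 < ∫ x, g x) :
    ∃ b > 0, ∀ ξ : E, ‖ξ‖ ≤ b →
      (∫ x, g x) / 2 + ‖ξ‖ * |∫ x, f x * exp ⟪ξ, x⟫| ≤ ∫ x, g x * exp ⟪ξ, x⟫ := by
  have hcont : Continuous fun ξ : E ↦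
      (∫ x, g x * exp ⟪ξ, x⟫) - ‖ξ‖ * |∫ x, f x * exp ⟪ξ, x⟫| :=
    (continuous_integral_mul_exp_inner hg hgc).sub
      (continuous_norm.mul (continuous_integral_mul_exp_inner hf hfc).abs)
  have hnear := (hcont.tendsto' 0 (∫ x, g x) (by simp)).eventually_const_lt (half_lt_self hpos)
  obtain ⟨b, hb, hball⟩ := nhds_basis_closedBall.eventually_iff.1 hnear
  exact ⟨b, hb, fun ξ hξ ↦ (le_sub_iff_add_le.1 (hball (mem_closedBall_zero_iff.2 hξ)).le)⟩

theorem integral_fderiv_mul_exp_inner (hf : ContDiff ℝ 1 f) (hfc : HasCompactSupport f)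
    (ξ e : E) :
    ∫ x, fderiv ℝ f x e * exp ⟪ξ, x⟫ = -⟪ξ, e⟫ * ∫ x, f x * exp ⟪ξ, x⟫ := by
  have hf₀ : Continuous f := hf.continuous
  have hexp (x : E) : HasFDerivAt (fun y : E ↦ exp ⟪ξ, y⟫) (exp ⟪ξ, x⟫ • innerSL ℝ ξ) x :=
    (innerSL ℝ ξ).hasFDerivAt.exp
  have hexp' (x : E) : fderiv ℝ (fun y : E ↦ exp ⟪ξ, y⟫) x e = exp ⟪ξ, x⟫ * ⟪ξ, e⟫ := by
    simp [(hexp x).fderiv]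
  have hparts := integral_mul_fderiv_eq_neg_fderiv_mul_of_integrable (μ := volume)
    (f := f) (g := fun y : E ↦ exp ⟪ξ, y⟫) (v := e)
    ((by fun_prop : Continuous _).integrable_of_hasCompactSupport
      (hfc.fderiv_apply ℝ e).mul_right)
    ((by simp only [hexp']; fun_prop : Continuous _).integrable_of_hasCompactSupport hfc.mul_right)
    ((by fun_prop : Continuous _).integrable_of_hasCompactSupport hfc.mul_right)
    (fun x _ ↦ hf.differentiable one_ne_zero x) (fun x _ ↦ (hexp x).differentiableAt)
  simp only [hexp', ← mul_assoc, integral_mul_const] at hparts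
  linarith

theorem measureReal_unitBall_pos : 0 < volume.real (ball (0 : E) 1) :=
  toReal_pos (measure_ball_pos _ _ one_pos).ne' measure_ball_lt_top.ne

end Data

variable {n : ℕ} {w : STn n → ℝ} {R t : ℝ} {ξ : Spc n}

/-- The moment `∫ w(t, x) exp ⟪ξ, x⟫ dx` of the time slice, truncated to a fixed ball so that it is
a smooth function of all real `t` whatever the support of `w`. -/
noncomputable def expMoment (R : ℝ) (ξ : Spc n) (w : STn n → ℝ) (t : ℝ) : ℝ :=
  ∫ x in closedBall 0 R, w (t, x) * exp ⟪ξ, x⟫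

theorem expMoment_eq_integral (hw : ∀ x, R < ‖x‖ → w (t, x) = 0) :
    expMoment R ξ w t = ∫ x, w (t, x) * exp ⟪ξ, x⟫ :=
  setIntegral_eq_integral_of_forall_compl_eq_zero fun x hx ↦ by
    rw [hw x (by simpa using hx), zero_mul]

theorem expMoment_eq_of_le {ρ : ℝ} (hρ : ρ ≤ R) (hw : ∀ x, ρ < ‖x‖ → w (t, x) = 0) :
    expMoment R ξ w t = expMoment ρ ξ w t := by
  rw [expMoment_eq_integral hw, expMoment_eq_integral fun x hx ↦ hw x (hρ.trans_lt hx)]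

theorem expMoment_zero_freq : expMoment R 0 w t = ∫ x in closedBall 0 R, w (t, x) := by
  simp [expMoment]

theorem contDiff_dirD {m k : WithTop ℕ∞} (hmk : m + 1 ≤ k) (hw : ContDiff ℝ k w) (e : STn n) :
    ContDiff ℝ m (dirD e w) :=
  (hw.fderiv_right hmk).clm_apply contDiff_const

theorem continuous_dirD (hw : ContDiff ℝ 1 w) (e : STn n) : Continuous (dirD e w) :=
  (contDiff_dirD (m := 0) (by simp) hw e).continuous

theorem hasDerivAt_expMoment (hw : ContDiff ℝ 1 w) :
    HasDerivAt (expMoment R ξ w) (expMoment R ξ (dtD w) t) t := by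
  have hc : Continuous w := hw.continuous
  have hd : Continuous (dtD w) := continuous_dirD hw _
  have hint {k : Spc n → ℝ} (hk : Continuous k) : IntegrableOn k (closedBall 0 R) :=
    integrableOn_closedBall_of_continuous hk R
  obtain ⟨M, hM⟩ := (isCompact_Icc.prod (isCompact_closedBall (0 : Spc n) R))
    |>.exists_bound_of_continuousOn (s := Set.Icc (t - 1) (t + 1) ×ˢ closedBall (0 : Spc n) R)
    (f := fun z : STn n ↦ dtD w z * exp ⟪ξ, z.2⟫) (by fun_prop)
  refine (hasDerivAt_integral_of_dominated_loc_of_deriv_le (bound := fun _ ↦ M)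
    (F := fun s x ↦ w (s, x) * exp ⟪ξ, x⟫) (F' := fun s x ↦ dtD w (s, x) * exp ⟪ξ, x⟫)
    (Icc_mem_nhds (sub_one_lt t) (lt_add_one t))
    (.of_forall fun s ↦ (hint (by fun_prop)).aestronglyMeasurable) (hint (by fun_prop))
    (hint (by fun_prop)).aestronglyMeasurable ?_
    (hint continuous_const) ?_).2
  · filter_upwards [ae_restrict_mem measurableSet_closedBall] with x hx s hs
    exact hM (s, x) ⟨hs, hx⟩
  · refine .of_forall fun x s _ ↦ HasDerivAt.mul_const ?_ _
    exact (hw.differentiable one_ne_zero (s, x)).hasFDerivAt.comp_hasDerivAt s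
      ((hasDerivAt_id s).prodMk (hasDerivAt_const s x))

theorem deriv_expMoment (hw : ContDiff ℝ 1 w) :
    deriv (expMoment R ξ w) = expMoment R ξ (dtD w) :=
  funext fun _ ↦ (hasDerivAt_expMoment hw).deriv

theorem contDiff_expMoment {k : ℕ} (hw : ContDiff ℝ k w) : ContDiff ℝ k (expMoment R ξ w) := by
  induction k generalizing w with
  | zero =>
    have := hw.continuous
    exact contDiff_zero.2 (continuous_parametric_integral_of_continuous
      (f := fun (t : ℝ) (x : Spc n) ↦ w (t, x) * exp ⟪ξ, x⟫) (by fun_prop)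
      (isCompact_closedBall 0 R))
  | succ k ih =>
    have hw₁ : ContDiff ℝ 1 w := hw.of_le (by simp)
    rw [Nat.cast_add, Nat.cast_one, contDiff_succ_iff_deriv, deriv_expMoment hw₁]
    exact ⟨fun t ↦ (hasDerivAt_expMoment hw₁).differentiableAt, by simp,
      ih (contDiff_dirD le_rfl hw _)⟩

theorem dirD_zero_prodMk (hw : ContDiff ℝ 1 w) (e x : Spc n) :
    dirD (0, e) w (t, x) = fderiv ℝ (fun y ↦ w (t, y)) x e := by
  have h := (hw.differentiable one_ne_zero (t, x)).hasFDerivAt.comp x (hasFDerivAt_prodMk_right t x)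
  simp [dirD, show fderiv ℝ (fun y ↦ w (t, y)) x = _ from h.fderiv]

theorem dirD_zero_prodMk_eq_zero (hw : ContDiff ℝ 1 w) (hw₀ : ∀ x, R < ‖x‖ → w (t, x) = 0)
    (e x : Spc n) (hx : R < ‖x‖) : dirD (0, e) w (t, x) = 0 := by
  have hzero : (fun y ↦ w (t, y)) =ᶠ[nhds x] fun _ ↦ 0 := by
    filter_upwards [continuous_norm.continuousAt.eventually (lt_mem_nhds hx)] with y hy
    exact hw₀ y hy
  rw [dirD_zero_prodMk hw, hzero.fderiv_eq]
  simp

theorem expMoment_dirD_zero_prodMk (hw : ContDiff ℝ 1 w) (hw₀ : ∀ x, R < ‖x‖ → w (t, x) = 0)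
    (e : Spc n) : expMoment R ξ (dirD (0, e) w) t = -⟪ξ, e⟫ * expMoment R ξ w t := by
  have hslice : ContDiff ℝ 1 fun x ↦ w (t, x) := hw.comp (contDiff_prodMk_right t)
  have hcompact : HasCompactSupport fun x ↦ w (t, x) :=
    .intro (isCompact_closedBall 0 R) fun x hx ↦ hw₀ x (by simpa using hx)
  rw [expMoment_eq_integral (dirD_zero_prodMk_eq_zero hw hw₀ e), expMoment_eq_integral hw₀,
    ← integral_fderiv_mul_exp_inner hslice hcompact]
  simp only [dirD_zero_prodMk hw]

theorem integrableOn_mul_exp_inner (hw : Continuous w) :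
    IntegrableOn (fun x ↦ w (t, x) * exp ⟪ξ, x⟫) (closedBall 0 R) :=
  integrableOn_closedBall_of_continuous (by fun_prop) R

theorem expMoment_lapD (hw : ContDiff ℝ 2 w) (hw₀ : ∀ x, R < ‖x‖ → w (t, x) = 0) :
    expMoment R ξ (lapD w) t = ‖ξ‖ ^ 2 * expMoment R ξ w t := by
  have hw₁ : ContDiff ℝ 1 w := hw.of_le one_le_two
  have hdx (j : Fin n) : ContDiff ℝ 1 (dxD j w) := contDiff_dirD one_add_one_eq_two.le hw _
  have hterm (j : Fin n) : expMoment R ξ (dxD j (dxD j w)) t = ξ j ^ 2 * expMoment R ξ w t := by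
    calc expMoment R ξ (dxD j (dxD j w)) t
        = -⟪ξ, EuclideanSpace.single j 1⟫ * expMoment R ξ (dxD j w) t :=
          expMoment_dirD_zero_prodMk (hdx j) (dirD_zero_prodMk_eq_zero hw₁ hw₀ _) _
      _ = -⟪ξ, EuclideanSpace.single j 1⟫ *
          (-⟪ξ, EuclideanSpace.single j 1⟫ * expMoment R ξ w t) := by
        rw [dxD, expMoment_dirD_zero_prodMk hw₁ hw₀]
      _ = ξ j ^ 2 * expMoment R ξ w t := by
        rw [EuclideanSpace.inner_single_right, one_mul, conj_trivial]
        ring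
  have hsum : expMoment R ξ (lapD w) t = ∑ j, expMoment R ξ (dxD j (dxD j w)) t := by
    simp only [expMoment, lapD, Finset.sum_mul]
    exact integral_finsetSum _ fun j _ ↦ integrableOn_mul_exp_inner (continuous_dirD (hdx j) _)
  simp only [hsum, hterm, ← Finset.sum_mul, EuclideanSpace.real_norm_sq_eq]

theorem continuous_boxD (hw : ContDiff ℝ 2 w) : Continuous (boxD w) := by
  have hdd (e : STn n) : Continuous (dirD e (dirD e w)) :=
    continuous_dirD (contDiff_dirD one_add_one_eq_two.le hw e) e
  exact (hdd _).sub (continuous_finsetSum _ fun j _ ↦ hdd _)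

theorem deriv_deriv_expMoment (hw : ContDiff ℝ 2 w) (hw₀ : ∀ x, R < ‖x‖ → w (t, x) = 0) :
    deriv (deriv (expMoment R ξ w)) t =
      ‖ξ‖ ^ 2 * expMoment R ξ w t + expMoment R ξ (boxD w) t := by
  have hdt : ContDiff ℝ 1 (dtD w) := contDiff_dirD one_add_one_eq_two.le hw _
  have hlap : lapD w = dtD (dtD w) - boxD w := by
    ext z
    simp [boxD]
  have hbox : expMoment R ξ (lapD w) t =
      expMoment R ξ (dtD (dtD w)) t - expMoment R ξ (boxD w) t := by
    simp only [hlap, expMoment, Pi.sub_apply, sub_mul]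
    exact integral_sub (integrableOn_mul_exp_inner (continuous_dirD hdt _))
      (integrableOn_mul_exp_inner (continuous_boxD hw))
  rw [deriv_expMoment (hw.of_le one_le_two), deriv_expMoment hdt, ← expMoment_lapD hw hw₀, hbox]
  ring

theorem sq_norm_mul_expMoment_le_deriv_deriv (hw : ContDiff ℝ 2 w)
    (hw₀ : ∀ x, R < ‖x‖ → w (t, x) = 0) (hbox : ∀ x, 0 ≤ boxD w (t, x)) :
    ‖ξ‖ ^ 2 * expMoment R ξ w t ≤ deriv (deriv (expMoment R ξ w)) t := by
  rw [deriv_deriv_expMoment hw hw₀]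
  exact le_add_of_nonneg_right (integral_nonneg fun x ↦ mul_nonneg (hbox x) (exp_pos _).le)

theorem setIntegral_le_deriv_deriv_expMoment {ρ : ℝ} {h : Spc n → ℝ} (hw : ContDiff ℝ 2 w)
    (hw₀ : ∀ x, R < ‖x‖ → w (t, x) = 0) (hρ : ρ ≤ R) (hh : Continuous h) (h₀ : ∀ x, 0 ≤ h x)
    (hle : ∀ x, h x ≤ boxD w (t, x)) :
    ∫ x in closedBall 0 ρ, h x ≤ deriv (deriv (expMoment R 0 w)) t := by
  rw [deriv_deriv_expMoment hw hw₀, norm_zero, zero_pow two_ne_zero, zero_mul, zero_add,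
    expMoment_zero_freq]
  have hbox := continuous_boxD hw
  calc ∫ x in closedBall 0 ρ, h x
      ≤ ∫ x in closedBall 0 R, h x :=
        setIntegral_mono_set (integrableOn_closedBall_of_continuous hh R) (.of_forall h₀)
          (closedBall_subset_closedBall hρ).eventuallyLE
    _ ≤ ∫ x in closedBall 0 R, boxD w (t, x) :=
        setIntegral_mono (integrableOn_closedBall_of_continuous hh R)
          (integrableOn_closedBall_of_continuous (by fun_prop) R) hle

theorem rpow_mul_abs_expMoment_rpow_le_deriv_deriv {ρ r : ℝ} {v : STn n → ℝ} (hr : 1 ≤ r)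
    (hv : Continuous v) (hw : ContDiff ℝ 2 w) (hρ : 0 < ρ) (hρR : ρ ≤ R)
    (hv₀ : ∀ x, ρ < ‖x‖ → v (t, x) = 0) (hw₀ : ∀ x, R < ‖x‖ → w (t, x) = 0)
    (hle : ∀ x, |v (t, x)| ^ r ≤ boxD w (t, x)) :
    volume.real (ball (0 : Spc n) 1) ^ (-(r - 1)) * ρ ^ (-(n * (r - 1))) *
      |expMoment R 0 v t| ^ r ≤ deriv (deriv (expMoment R 0 w)) t := by
  set V := volume.real (ball (0 : Spc n) 1)
  have hV : 0 < V := measureReal_unitBall_pos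
  have hslice : Continuous fun x ↦ v (t, x) := by fun_prop
  have hholder := abs_setIntegral_closedBall_rpow_le volume hr hslice hρ.le
  rw [finrank_euclideanSpace_fin, ← expMoment_zero_freq, ← expMoment_eq_of_le hρR hv₀] at hholder
  have hpow : V ^ (-(r - 1)) * ρ ^ (-(n * (r - 1))) = ((ρ ^ n * V) ^ (r - 1))⁻¹ := by
    rw [mul_rpow (by positivity) hV.le, ← Real.rpow_natCast, ← Real.rpow_mul hρ.le, rpow_neg hV.le,
      rpow_neg hρ.le, mul_inv, mul_comm]
  calc V ^ (-(r - 1)) * ρ ^ (-(n * (r - 1))) * |expMoment R 0 v t| ^ r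
      ≤ ∫ x in closedBall 0 ρ, |v (t, x)| ^ r := by
        rwa [hpow, inv_mul_le_iff₀ (by positivity)]
    _ ≤ _ := setIntegral_le_deriv_deriv_expMoment hw hw₀ hρR
        (hslice.abs.rpow_const fun _ ↦ .inr (by linarith)) (fun x ↦ by positivity) hle

end ExpMoment

/-! ### Supersolutions of the system -/

section Supersolution

open Metric
open scoped RealInnerProductSpace

variable {n : ℕ} {p q r ε T : ℝ} {f g f₁ g₁ f₂ g₂ : Spc n → ℝ} {u v w : STn n → ℝ}

/-- A `C²` function with Cauchy data `(ε f, ε g)` which, together with its time derivative, vanishes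
outside the cone `|x| ≤ t + 1` for `0 ≤ t < T`. -/
structure IsConeEvolution (ε T : ℝ) (f g : Spc n → ℝ) (w : STn n → ℝ) : Prop where
  contDiff : ContDiff ℝ 2 w
  initial : ∀ x, w (0, x) = ε * f x
  dtD_initial : ∀ x, dtD w (0, x) = ε * g x
  eq_zero : ∀ t ∈ Set.Ico 0 T, ∀ x, t + 1 < ‖x‖ → w (t, x) = 0
  dtD_eq_zero : ∀ t ∈ Set.Ico 0 T, ∀ x, t + 1 < ‖x‖ → dtD w (t, x) = 0

namespace IsConeEvolution

variable {t : ℝ} {ξ : Spc n}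

theorem contDiff_one (hw : IsConeEvolution ε T f g w) : ContDiff ℝ 1 w :=
  hw.contDiff.of_le one_le_two

theorem continuous_dtD (hw : IsConeEvolution ε T f g w) : Continuous (dtD w) :=
  continuous_dirD hw.contDiff_one _

theorem eq_zero_of_lt (hw : IsConeEvolution ε T f g w) (ht : t ∈ Set.Ico 0 T) (x : Spc n)
    (hx : T + 1 < ‖x‖) : w (t, x) = 0 :=
  hw.eq_zero t ht x (by linarith [ht.2])

theorem dtD_eq_zero_of_lt (hw : IsConeEvolution ε T f g w) (ht : t ∈ Set.Ico 0 T) (x : Spc n)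
    (hx : T + 1 < ‖x‖) : dtD w (t, x) = 0 :=
  hw.dtD_eq_zero t ht x (by linarith [ht.2])

theorem expMoment_initial (hw : IsConeEvolution ε T f g w) (hT : 0 < T) :
    expMoment (T + 1) ξ w 0 = ε * ∫ x, f x * exp ⟪ξ, x⟫ := by
  rw [expMoment_eq_integral (hw.eq_zero_of_lt ⟨le_rfl, hT⟩), ← integral_const_mul]
  simp only [hw.initial, mul_assoc]

theorem deriv_expMoment_initial (hw : IsConeEvolution ε T f g w) (hT : 0 < T) :
    deriv (expMoment (T + 1) ξ w) 0 = ε * ∫ x, g x * exp ⟪ξ, x⟫ := by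
  rw [deriv_expMoment hw.contDiff_one,
    expMoment_eq_integral (hw.dtD_eq_zero_of_lt ⟨le_rfl, hT⟩), ← integral_const_mul]
  simp only [hw.dtD_initial, mul_assoc]

theorem exists_le_exp_mul_expMoment_dtD (hf : Continuous f) (hfc : HasCompactSupport f)
    (hg : Continuous g) (hgc : HasCompactSupport g) (hpos : 0 < ∫ x, g x) :
    ∃ b > 0, ∀ ε T w, 0 < ε → IsConeEvolution ε T f g w →
      (∀ t ∈ Set.Ioo 0 T, ∀ x, 0 ≤ boxD w (t, x)) → ∀ ξ : Spc n, ‖ξ‖ ≤ b → ∀ t ∈ Set.Ioo 0 T,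
        (∫ x, g x) / 4 * ε ≤ exp (-(‖ξ‖ * t)) * expMoment (t + 1) ξ (dtD w) t := by
  obtain ⟨b, hb, hdata⟩ := exists_half_integral_add_le_integral_mul_exp_inner hf hfc hg hgc hpos
  refine ⟨b, hb, fun ε T w hε hw hbox ξ hξ t ht ↦ ?_⟩
  have hT : 0 < T := ht.1.trans ht.2
  set M := ∫ x, f x * exp ⟪ξ, x⟫
  set N := ∫ x, g x * exp ⟪ξ, x⟫
  have hplus : (∫ x, g x) / 2 ≤ N + ‖ξ‖ * M := by
    nlinarith [hdata ξ hξ, neg_abs_le M, norm_nonneg ξ]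
  have hminus : ‖ξ‖ * M ≤ N := by nlinarith [hdata ξ hξ, le_abs_self M, norm_nonneg ξ]
  calc (∫ x, g x) / 4 * ε
      ≤ (deriv (expMoment (T + 1) ξ w) 0 + ‖ξ‖ * expMoment (T + 1) ξ w 0) / 2 := by
        rw [hw.expMoment_initial hT, hw.deriv_expMoment_initial hT]
        nlinarith
    _ ≤ exp (-(‖ξ‖ * t)) * deriv (expMoment (T + 1) ξ w) t := by
        refine half_deriv_add_mul_le_exp_mul_deriv (contDiff_expMoment hw.contDiff) ht.1.le
          (fun s hs ↦ ?_) ?_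
        · have hsT : s ∈ Set.Ioo 0 T := ⟨hs.1, hs.2.trans ht.2⟩
          exact sq_norm_mul_expMoment_le_deriv_deriv hw.contDiff
            (hw.eq_zero_of_lt (Set.Ioo_subset_Ico_self hsT)) (hbox s hsT)
        · rw [hw.expMoment_initial hT, hw.deriv_expMoment_initial hT]
          nlinarith
    _ = exp (-(‖ξ‖ * t)) * expMoment (t + 1) ξ (dtD w) t := by
        rw [deriv_expMoment hw.contDiff_one, expMoment_eq_of_le (by linarith [ht.2])
          (hw.dtD_eq_zero t (Set.Ioo_subset_Ico_self ht))]

theorem exists_le_setIntegral_abs_dtD_rpow (hn : 1 ≤ n) (hf : Continuous f)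
    (hfc : HasCompactSupport f) (hg : Continuous g) (hgc : HasCompactSupport g)
    (hpos : 0 < ∫ x, g x) :
    ∃ c > 0, ∀ r ε T w, 1 ≤ r → 0 < ε → IsConeEvolution ε T f g w →
      (∀ t ∈ Set.Ioo 0 T, ∀ x, 0 ≤ boxD w (t, x)) → ∀ t ∈ Set.Ioo 0 T,
        c ^ r * ε ^ r * (t + 1) ^ (((n : ℝ) - 1) * (1 - r / 2)) ≤
          ∫ x in closedBall 0 (t + 1), |dtD w (t, x)| ^ r := by
  obtain ⟨b, hb, hmoment⟩ := exists_le_exp_mul_expMoment_dtD hf hfc hg hgc hpos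
  obtain ⟨c, hc, hcone⟩ := exists_le_setIntegral_abs_rpow (E := Spc n) (d := n - 1)
    (by rw [finrank_euclideanSpace_fin, Nat.sub_add_cancel hn]) hb
  refine ⟨c * ((∫ x, g x) / 4), by positivity, fun r ε T w hr hε hw hbox t ht ↦ ?_⟩
  have hdt := hw.continuous_dtD
  have h := hcone r t ((∫ x, g x) / 4 * ε) (fun x ↦ dtD w (t, x)) hr ht.1.le (by positivity)
    (by fun_prop) fun ξ hξ ↦ hmoment ε T w hε hw hbox ξ hξ t ht
  rwa [Nat.cast_pred hn, ← mul_assoc, mul_rpow (by positivity) hε.le] at h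

end IsConeEvolution

/-- A pair `(u, v)` with `□u ≥ |v|^p` and `□v ≥ |u|^q + |∂_t u|^r` on `0 < t < T`, with Cauchy data
of size `ε` and supported in the cone `|x| ≤ t + 1`. -/
structure IsSupersolution (p q r ε T : ℝ) (f₁ g₁ f₂ g₂ : Spc n → ℝ) (u v : STn n → ℝ) : Prop where
  fst : IsConeEvolution ε T f₁ g₁ u
  snd : IsConeEvolution ε T f₂ g₂ v
  le_boxD_fst : ∀ t ∈ Set.Ioo 0 T, ∀ x, |v (t, x)| ^ p ≤ boxD u (t, x)
  le_boxD_snd : ∀ t ∈ Set.Ioo 0 T, ∀ x,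
    |u (t, x)| ^ q + |dtD u (t, x)| ^ r ≤ boxD v (t, x)

namespace IsSupersolution

variable {t : ℝ}

theorem boxD_fst_nonneg (h : IsSupersolution p q r ε T f₁ g₁ f₂ g₂ u v) (ht : t ∈ Set.Ioo 0 T)
    (x : Spc n) : 0 ≤ boxD u (t, x) :=
  le_trans (by positivity) (h.le_boxD_fst t ht x)

theorem le_deriv2_expMoment_fst (h : IsSupersolution p q r ε T f₁ g₁ f₂ g₂ u v) (hp : 1 ≤ p)
    (ht : t ∈ Set.Ioo 0 T) :
    volume.real (ball (0 : Spc n) 1) ^ (-(p - 1)) * (t + 1) ^ (-(n * (p - 1))) *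
      |expMoment (T + 1) 0 v t| ^ p ≤ deriv (deriv (expMoment (T + 1) 0 u)) t :=
  have ht' := Set.Ioo_subset_Ico_self ht
  rpow_mul_abs_expMoment_rpow_le_deriv_deriv hp h.snd.contDiff.continuous h.fst.contDiff
    (by linarith [ht.1]) (by linarith [ht.2]) (h.snd.eq_zero t ht') (h.fst.eq_zero_of_lt ht')
    (h.le_boxD_fst t ht)

theorem le_deriv2_expMoment_snd (h : IsSupersolution p q r ε T f₁ g₁ f₂ g₂ u v) (hq : 1 ≤ q)
    (ht : t ∈ Set.Ioo 0 T) :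
    volume.real (ball (0 : Spc n) 1) ^ (-(q - 1)) * (t + 1) ^ (-(n * (q - 1))) *
      |expMoment (T + 1) 0 u t| ^ q ≤ deriv (deriv (expMoment (T + 1) 0 v)) t :=
  have ht' := Set.Ioo_subset_Ico_self ht
  rpow_mul_abs_expMoment_rpow_le_deriv_deriv hq h.fst.contDiff.continuous h.snd.contDiff
    (by linarith [ht.1]) (by linarith [ht.2]) (h.fst.eq_zero t ht') (h.snd.eq_zero_of_lt ht')
    fun x ↦ (le_add_of_nonneg_right (by positivity)).trans (h.le_boxD_snd t ht x)

theorem setIntegral_abs_dtD_rpow_le (h : IsSupersolution p q r ε T f₁ g₁ f₂ g₂ u v) (hr : 0 ≤ r)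
    (ht : t ∈ Set.Ioo 0 T) :
    ∫ x in closedBall 0 (t + 1), |dtD u (t, x)| ^ r ≤ deriv (deriv (expMoment (T + 1) 0 v)) t := by
  have hdt : Continuous fun x ↦ dtD u (t, x) := h.fst.continuous_dtD.comp (.prodMk_right t)
  exact setIntegral_le_deriv_deriv_expMoment h.snd.contDiff
    (h.snd.eq_zero_of_lt (Set.Ioo_subset_Ico_self ht)) (by linarith [ht.2])
    (hdt.abs.rpow_const fun _ ↦ .inr hr) (fun x ↦ by positivity)
    fun x ↦ (le_add_of_nonneg_left (by positivity)).trans (h.le_boxD_snd t ht x)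

theorem exists_averageSystem (hn : 1 ≤ n) (hp : 1 ≤ p) (hq : 1 ≤ q) (hr : 1 ≤ r)
    (hf₁ : Continuous f₁) (hf₁c : HasCompactSupport f₁) (hg₁ : Continuous g₁)
    (hg₁c : HasCompactSupport g₁) (hg₁pos : 0 < ∫ x, g₁ x) (hg₂pos : 0 < ∫ x, g₂ x) :
    ∃ c > 0, ∃ A, ∀ ε T u v, 0 < ε → 0 < T → IsSupersolution p q r ε T f₁ g₁ f₂ g₂ u v →
      AverageSystem n ((n - 1) * (1 - r / 2)) p q r c A ε T
        (expMoment (T + 1) 0 u) (expMoment (T + 1) 0 v) := by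
  obtain ⟨k, hk, hcone⟩ :=
    IsConeEvolution.exists_le_setIntegral_abs_dtD_rpow hn hf₁ hf₁c hg₁ hg₁c hg₁pos
  set V := volume.real (ball (0 : Spc n) 1)
  have hV : 0 < V := measureReal_unitBall_pos
  obtain ⟨c, hc, hcp, hcq, hcr, hcg₁, hcg₂⟩ : ∃ c > 0, c ≤ V ^ (-(p - 1)) ∧ c ≤ V ^ (-(q - 1)) ∧
      c ≤ k ^ r ∧ c ≤ ∫ x, g₁ x ∧ c ≤ ∫ x, g₂ x :=
    ⟨min (V ^ (-(p - 1))) (min (V ^ (-(q - 1))) (min (k ^ r) (min (∫ x, g₁ x) (∫ x, g₂ x)))),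
      by positivity, by simp, by simp, by simp, by simp, by simp⟩
  refine ⟨c, hc, max |∫ x, f₁ x| |∫ x, f₂ x|, fun ε T u v hε hT h ↦ ?_⟩
  exact {
    contDiff_fst := contDiff_expMoment h.fst.contDiff
    contDiff_snd := contDiff_expMoment h.snd.contDiff
    fst_zero := by
      rw [h.fst.expMoment_initial hT]
      simp only [inner_zero_left, Real.exp_zero, mul_one]
      nlinarith [neg_abs_le (∫ x, f₁ x), le_max_left |∫ x, f₁ x| |∫ x, f₂ x|]
    snd_zero := by
      rw [h.snd.expMoment_initial hT]
      simp only [inner_zero_left, Real.exp_zero, mul_one]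
      nlinarith [neg_abs_le (∫ x, f₂ x), le_max_right |∫ x, f₁ x| |∫ x, f₂ x|]
    deriv_fst_zero := by
      rw [h.fst.deriv_expMoment_initial hT, mul_comm]
      simpa using mul_le_mul_of_nonneg_left hcg₁ hε.le
    deriv_snd_zero := by
      rw [h.snd.deriv_expMoment_initial hT, mul_comm]
      simpa using mul_le_mul_of_nonneg_left hcg₂ hε.le
    le_deriv2_fst := fun t ht ↦ le_trans (by have := ht.1; gcongr)
      (h.le_deriv2_expMoment_fst hp ht)
    le_deriv2_snd := fun t ht ↦ le_trans (by have := ht.1; gcongr)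
      (h.le_deriv2_expMoment_snd hq ht)
    forcing := fun t ht ↦ by
      refine le_trans ?_ <| (hcone r ε T u hr hε h.fst (fun s hs ↦ h.boxD_fst_nonneg hs) t ht).trans
        (h.setIntegral_abs_dtD_rpow_le (by linarith) ht)
      have := ht.1
      gcongr }

end IsSupersolution

end Supersolution

theorem lifespan_exponent_eq {ν : ℝ} (p q : ℝ) (hν : 1 < ν) :
    (ν + 1) / (ν - 1) * (p * q - 1) /
        (2 * (q + 1) - ((ν - 1) * ((ν + 1) / (ν - 1)) / 2 - 1) * (p * q - 1)) =
      2 * (ν + 1) * (p * q - 1) / ((ν - 1) * (4 * q - (ν - 1) * p * q + ν + 3)) := by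
  have hν' : ν - 1 ≠ 0 := (sub_pos.2 hν).ne'
  rw [mul_div_cancel₀ _ hν', show 2 * (q + 1) - ((ν + 1) / 2 - 1) * (p * q - 1) =
    (4 * q - (ν - 1) * p * q + ν + 3) / 2 by ring]
  field_simp

theorem lifespan_bound_general {n : ℕ} {p q r : ℝ} {f₁ g₁ f₂ g₂ : Spc n → ℝ} (hn : 1 ≤ n)
    (hp : 1 ≤ p) (hq : 1 ≤ q) (hpq : 1 < p * q) (hr : 1 < r)
    (hD : 0 < 2 * (q + 1) - ((n - 1) * r / 2 - 1) * (p * q - 1))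
    (hf₁ : Continuous f₁) (hf₁c : HasCompactSupport f₁)
    (hg₁ : Continuous g₁) (hg₁c : HasCompactSupport g₁)
    (hg₁pos : 0 < ∫ x, g₁ x) (hg₂pos : 0 < ∫ x, g₂ x) :
    ∃ C > 0, ∀ ε T u v, 0 < ε → 1 < T → IsSupersolution p q r ε T f₁ g₁ f₂ g₂ u v →
      T ≤ C * ε ^ (-(r * (p * q - 1) / (2 * (q + 1) - ((n - 1) * r / 2 - 1) * (p * q - 1)))) := by
  obtain ⟨c, hc, A, haverage⟩ :=
    IsSupersolution.exists_averageSystem hn hp hq hr.le hf₁ hf₁c hg₁ hg₁c hg₁pos hg₂pos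
  have hgap : 2 * (q + 1) - ((n - 1) * r / 2 - 1) * (p * q - 1) =
      2 * (q + 1) + ((n - 1) * (1 - r / 2) + 2 - n) * (p * q - 1) := by ring
  rw [hgap] at hD ⊢
  obtain ⟨C, hC, hlifespan⟩ :=
    AverageSystem.exists_lifespan_le (A := A) (Nat.cast_nonneg n) hp hq hpq hr hc hD
  exact ⟨C, hC, fun ε T u v hε hT h ↦
    hlifespan ε T _ _ hε hT (haverage ε T u v hε (by linarith) h)⟩

/-- Lifespan upper bound (estimate (2.14) of Hidano–Yokoyama). -/
theorem lifespan_bound (n : ℕ) (hn : 2 ≤ n) (p q : ℝ) (hp : 1 < p) (hq : 1 < q)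
    (hpq : 0 < 4 * q - ((n : ℝ) - 1) * p * q + n + 3)
    (f₁ g₁ f₂ g₂ : Spc n → ℝ)
    (hf₁ : ContDiff ℝ ∞ f₁) (hf₁c : HasCompactSupport f₁)
    (hg₁ : ContDiff ℝ ∞ g₁) (hg₁c : HasCompactSupport g₁)
    (hf₂ : ContDiff ℝ ∞ f₂) (hf₂c : HasCompactSupport f₂)
    (hg₂ : ContDiff ℝ ∞ g₂) (hg₂c : HasCompactSupport g₂)
    (hg₁pos : 0 < ∫ x, g₁ x) (hg₂pos : 0 < ∫ x, g₂ x) :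
    ∃ C > (0 : ℝ), ∀ ε : ℝ, 0 < ε → ∀ T : ℝ, 1 < T →
      ∀ u v : STn n → ℝ, ContDiff ℝ 2 u → ContDiff ℝ 2 v →
      (∀ z : STn n, 0 < z.1 → z.1 < T → boxD u z = |v z| ^ p) →
      (∀ z : STn n, 0 < z.1 → z.1 < T →
        boxD v z = |u z| ^ q + |dtD u z| ^ (((n : ℝ) + 1) / ((n : ℝ) - 1))) →
      (∀ x, u (0, x) = ε * f₁ x) → (∀ x, dtD u (0, x) = ε * g₁ x) →
      (∀ x, v (0, x) = ε * f₂ x) → (∀ x, dtD v (0, x) = ε * g₂ x) →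
      (∀ z : STn n, 0 ≤ z.1 → z.1 < T → z.1 + 1 < ‖z.2‖ →
        u z = 0 ∧ v z = 0 ∧ dtD u z = 0 ∧ dtD v z = 0) →
      T ≤ C * ε ^ (-(2 * ((n : ℝ) + 1) * (p * q - 1)) /
            (((n : ℝ) - 1) * (4 * q - ((n : ℝ) - 1) * p * q + n + 3))) := by
  have hn1 : 1 < (n : ℝ) := by exact_mod_cast hn
  have hn0 : 0 < (n : ℝ) - 1 := sub_pos.2 hn1
  have hpq1 : 1 < p * q := one_lt_mul hp.le hq
  have hr : 1 < ((n : ℝ) + 1) / (n - 1) := (one_lt_div hn0).2 (by linarith)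
  have hD : 0 < 2 * (q + 1) - ((n - 1) * (((n : ℝ) + 1) / (n - 1)) / 2 - 1) * (p * q - 1) := by
    rw [mul_div_cancel₀ _ hn0.ne']
    linarith
  obtain ⟨C, hC, hlifespan⟩ :=
    lifespan_bound_general (f₂ := f₂) (by omega) hp.le hq.le hpq1 hr hD
      hf₁.continuous hf₁c hg₁.continuous hg₁c hg₁pos hg₂pos
  rw [lifespan_exponent_eq p q hn1] at hlifespan
  refine ⟨C, hC, fun ε hε T hT u v hu hv hbu hbv hu₀ hu₁ hv₀ hv₁ hcone ↦ ?_⟩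
  rw [neg_div]
  refine hlifespan ε T u v hε hT
    { fst := ⟨hu, hu₀, hu₁, fun t ht x hx ↦ (hcone (t, x) ht.1 ht.2 hx).1,
        fun t ht x hx ↦ (hcone (t, x) ht.1 ht.2 hx).2.2.1⟩
      snd := ⟨hv, hv₀, hv₁, fun t ht x hx ↦ (hcone (t, x) ht.1 ht.2 hx).2.1,
        fun t ht x hx ↦ (hcone (t, x) ht.1 ht.2 hx).2.2.2⟩
      le_boxD_fst := fun t ht x ↦ (hbu (t, x) ht.1 ht.2).ge
      le_boxD_snd := fun t ht x ↦ (hbv (t, x) ht.1 ht.2).ge }
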